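/- Let n ≥ 1, let b ≥ 1 be an integer, and let α ∈ (1/2, 1] satisfy 2α < n and nb > 2α(b+1). Let p(·) ∈ P^log(ℝ^n) with p⁻ > b+1 and 2α·p⁺ < n(b+1). Then there exists C > 0 such that for every measurable u : (0,∞)×ℝ^n → ℝ: N_{p(·), nb/(2α)}( (t,x) ↦ ∫_0^t (𝔤_{t−s}^α ∗ (|u|^b u)(s,·))(x) ds ) ≤ C · ( N_{p(·), nb/(2α)}(u) )^{b+1}. -/

import Mathlib

open MeasureTheory Set
open scoped ENNReal FourierTransform

noncomputable section

/-- Euclidean space `ℝ^n`. -/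
abbrev Rn (n : ℕ) := EuclideanSpace ℝ (Fin n)

/-- Luxemburg norm of an `ℝ≥0∞`-valued function for a variable exponent `p`. -/
def luxNorm {Ω : Type*} [MeasurableSpace Ω] (μ : Measure Ω) (p : Ω → ℝ) (f : Ω → ℝ≥0∞) : ℝ≥0∞ :=
  sInf {lam : ℝ≥0∞ | 0 < lam ∧ ∫⁻ x, (f x / lam) ^ (p x) ∂μ ≤ 1}

/-- Luxemburg norm `‖f‖_{L^{p(·)}}` of a real-valued function. -/
def luxNormR {Ω : Type*} [MeasurableSpace Ω] (μ : Measure Ω) (p : Ω → ℝ) (f : Ω → ℝ) : ℝ≥0∞ :=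
  luxNorm μ p (fun x => ENNReal.ofReal |f x|)

/-- `p(·) ∈ P^log(Ω)`: measurable, with values in `[1,∞)` on `Ω`, locally log-Hölder
continuous on `Ω`, and satisfying the log-Hölder decay condition on `Ω`. -/
def IsPLog {E : Type*} [NormedAddCommGroup E] [MeasurableSpace E] (Ω : Set E) (p : E → ℝ) : Prop :=
  Measurable p ∧ (∀ x ∈ Ω, 1 ≤ p x) ∧
  ∃ C₁ > (0:ℝ), ∃ C₂ > (0:ℝ), ∃ pinf : ℝ,
    (∀ x ∈ Ω, ∀ y ∈ Ω, x ≠ y →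
      |1 / p x - 1 / p y| ≤ C₁ / Real.log (Real.exp 1 + 1 / ‖x - y‖)) ∧
    (∀ x ∈ Ω, |1 / p x - 1 / pinf| ≤ C₂ / Real.log (Real.exp 1 + ‖x‖))

/-- The fractional heat kernel `𝔤_t^α` on `ℝ^n`: the inverse Fourier transform of
`ξ ↦ exp (-t‖ξ‖^{2α})` (it is real-valued; we take the real part). -/
def gKer (n : ℕ) (α t : ℝ) (x : Rn n) : ℝ :=
  (𝓕⁻ (fun ξ : Rn n => (Real.exp (-t * ‖ξ‖ ^ (2 * α)) : ℂ)) x).re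

/-- Convolution on `ℝ^n`. -/
def conv (n : ℕ) (g f : Rn n → ℝ) (x : Rn n) : ℝ := ∫ y, g (x - y) * f y

/-- `x ↦ ess sup_{t>0} |u(t,x)|`, as an `ℝ≥0∞`-valued function. -/
def timeSup (n : ℕ) (u : ℝ → Rn n → ℝ) (x : Rn n) : ℝ≥0∞ :=
  essSup (fun t => ENNReal.ofReal |u t x|) (volume.restrict (Ioi (0:ℝ)))

/-- Mixed norm `‖f‖_{𝓛^{p(·)}_r} = max {‖f‖_{L^{p(·)}}, ‖f‖_{L^r}}`. -/
def mixedNorm (n : ℕ) (p : Rn n → ℝ) (r : ℝ) (f : Rn n → ℝ) : ℝ≥0∞ :=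
  max (luxNormR volume p f) (luxNormR volume (fun _ => r) f)

/-- `N_{p(·),r}(u) = ‖x ↦ ess sup_{t>0}|u(t,x)|‖_{𝓛^{p(·)}_r}`. -/
def mixedN (n : ℕ) (p : Rn n → ℝ) (r : ℝ) (u : ℝ → Rn n → ℝ) : ℝ≥0∞ :=
  max (luxNorm volume p (timeSup n u)) (luxNorm volume (fun _ => r) (timeSup n u))

/-- The centred Hardy–Littlewood maximal function over dyadic radii. -/
def dyadicMax (n : ℕ) (f : Rn n → ℝ≥0∞) (x : Rn n) : ℝ≥0∞ :=
  ⨆ k : ℤ, (volume (Metric.closedBall x ((2:ℝ) ^ k)))⁻¹ *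
    ∫⁻ y in Metric.closedBall x ((2:ℝ) ^ k), f y

theorem volume_closedBall_eq {n : ℕ} (x : Rn n) {R : ℝ} (hR : 0 ≤ R) :
    volume (Metric.closedBall x R) =
      ENNReal.ofReal R ^ n * volume (Metric.ball (0 : Rn n) 1) := by
  rw [Measure.addHaar_closedBall _ _ hR, ENNReal.ofReal_pow hR]
  simp

theorem two_zpow_pos (k : ℤ) : (0:ℝ) < 2 ^ k := by positivity

theorem volume_dyadic_ne_zero {n : ℕ} (x : Rn n) (k : ℤ) :
    volume (Metric.closedBall x ((2:ℝ) ^ k)) ≠ 0 :=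
  (Metric.measure_closedBall_pos _ _ (two_zpow_pos k)).ne'

theorem volume_dyadic_ne_top {n : ℕ} (x : Rn n) (k : ℤ) :
    volume (Metric.closedBall x ((2:ℝ) ^ k)) ≠ ∞ :=
  measure_closedBall_lt_top.ne

theorem measurable_setLIntegral_closedBall {n : ℕ} {f : Rn n → ℝ≥0∞} (hf : Measurable f) (R : ℝ) :
    Measurable fun x => ∫⁻ y in Metric.closedBall x R, f y := by
  have h : ∀ x, ∫⁻ y in Metric.closedBall x R, f y =
      ∫⁻ y, {q : Rn n × Rn n | dist q.2 q.1 ≤ R}.indicator (fun q => f q.2) (x, y) := by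
    intro x
    rw [← lintegral_indicator Metric.isClosed_closedBall.measurableSet]
    rfl
  simp_rw [h]
  apply Measurable.lintegral_prod_right'
  apply (hf.comp measurable_snd).indicator
  exact measurableSet_le (by fun_prop) measurable_const

theorem measurable_dyadicMax {n : ℕ} {f : Rn n → ℝ≥0∞} (hf : Measurable f) :
    Measurable (dyadicMax n f) := by
  apply Measurable.iSup
  intro k
  apply Measurable.mul _ (measurable_setLIntegral_closedBall hf _)
  have : ∀ x : Rn n, volume (Metric.closedBall x ((2:ℝ) ^ k)) =
      volume (Metric.closedBall (0 : Rn n) ((2:ℝ) ^ k)) := fun x => by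
    rw [volume_closedBall_eq x (two_zpow_pos k).le,
      volume_closedBall_eq 0 (two_zpow_pos k).le]
  simp_rw [this]
  exact measurable_const

theorem dyadicMax_add_le {n : ℕ} {f g : Rn n → ℝ≥0∞} (hf : Measurable f) (x : Rn n) :
    dyadicMax n (fun y => f y + g y) x ≤ dyadicMax n f x + dyadicMax n g x := by
  refine iSup_le fun k => ?_
  rw [lintegral_add_left hf, mul_add]
  exact add_le_add (le_iSup (fun k : ℤ => (volume (Metric.closedBall x ((2:ℝ) ^ k)))⁻¹ *
    ∫⁻ y in Metric.closedBall x ((2:ℝ) ^ k), f y) k)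
    (le_iSup (fun k : ℤ => (volume (Metric.closedBall x ((2:ℝ) ^ k)))⁻¹ *
    ∫⁻ y in Metric.closedBall x ((2:ℝ) ^ k), g y) k)

theorem dyadicMax_mono {n : ℕ} {f g : Rn n → ℝ≥0∞} (hfg : ∀ y, f y ≤ g y) (x : Rn n) :
    dyadicMax n f x ≤ dyadicMax n g x :=
  iSup_mono fun _ => mul_le_mul_right (lintegral_mono hfg) _

theorem dyadicMax_le_of_le {n : ℕ} {f : Rn n → ℝ≥0∞} {c : ℝ≥0∞} (hf : ∀ y, f y ≤ c) (x : Rn n) :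
    dyadicMax n f x ≤ c := by
  refine iSup_le fun k => ?_
  calc _ ≤ (volume (Metric.closedBall x ((2:ℝ) ^ k)))⁻¹ *
        ∫⁻ y in Metric.closedBall x ((2:ℝ) ^ k), c := by gcongr; exact hf _
    _ = c := by
      rw [setLIntegral_const, mul_comm c, ← mul_assoc, ENNReal.inv_mul_cancel
        (volume_dyadic_ne_zero x k) (volume_dyadic_ne_top x k), one_mul]

/-- Weak type `(1,1)` bound for the maximal function. -/
theorem dyadicMax_weak {n : ℕ} (hn : n ≠ 0) (f : Rn n → ℝ≥0∞) {c : ℝ≥0∞}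
    (hc0 : c ≠ 0) (hc : c ≠ ∞) :
    volume {x | c < dyadicMax n f x} ≤ 5 ^ n * c⁻¹ * ∫⁻ y, f y := by
  by_cases hI : ∫⁻ y, f y = ∞
  · rw [hI, ENNReal.mul_top]
    · exact le_top
    · simp [hc]
  have hv0 : volume (Metric.ball (0 : Rn n) 1) ≠ 0 :=
    (Metric.measure_ball_pos _ _ one_pos).ne'
  have hv : volume (Metric.ball (0 : Rn n) 1) ≠ ∞ := measure_ball_lt_top.ne
  have key : ∀ x : Rn n, ∃ k : ℤ, c < dyadicMax n f x →
      c * volume (Metric.closedBall x ((2:ℝ) ^ k)) ≤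
        ∫⁻ y in Metric.closedBall x ((2:ℝ) ^ k), f y := by
    intro x
    by_cases hx : c < dyadicMax n f x
    · obtain ⟨k, hk⟩ := lt_iSup_iff.1 hx
      refine ⟨k, fun _ => ?_⟩
      calc _ ≤ ((volume (Metric.closedBall x ((2:ℝ) ^ k)))⁻¹ *
            ∫⁻ y in Metric.closedBall x ((2:ℝ) ^ k), f y) *
              volume (Metric.closedBall x ((2:ℝ) ^ k)) := by gcongr
        _ = _ := by
          rw [mul_comm, ← mul_assoc, ENNReal.mul_inv_cancel
            (volume_dyadic_ne_zero x k) (volume_dyadic_ne_top x k), one_mul]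
    · exact ⟨0, fun h => absurd h hx⟩
  choose k hk using key
  have hbound : ∀ x ∈ {x | c < dyadicMax n f x}, (2:ℝ) ^ k x ≤
      max 1 (c⁻¹ * (∫⁻ y, f y) * (volume (Metric.ball (0 : Rn n) 1))⁻¹).toReal := by
    intro x hx
    by_cases h1 : (2:ℝ) ^ k x ≤ 1
    · exact h1.trans (le_max_left _ _)
    refine le_trans ?_ (le_max_right _ _)
    push Not at h1
    have h2 := (hk x hx).trans (setLIntegral_le_lintegral _ _)
    rw [volume_closedBall_eq x (two_zpow_pos _).le] at h2
    have h3 : ENNReal.ofReal ((2:ℝ) ^ k x) ≤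
        c⁻¹ * (∫⁻ y, f y) * (volume (Metric.ball (0 : Rn n) 1))⁻¹ := by
      rw [← div_eq_mul_inv, ENNReal.le_div_iff_mul_le (Or.inl hv0) (Or.inl hv), mul_comm c⁻¹,
        ← div_eq_mul_inv, ENNReal.le_div_iff_mul_le (Or.inl hc0) (Or.inl hc)]
      refine le_trans ?_ h2
      rw [mul_comm _ c]
      gcongr
      refine le_self_pow₀ ?_ hn
      rw [← ENNReal.ofReal_one]
      exact ENNReal.ofReal_le_ofReal h1.le
    rw [ENNReal.ofReal_le_iff_le_toReal] at h3
    · exact h3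
    · exact ENNReal.mul_ne_top (ENNReal.mul_ne_top (ENNReal.inv_ne_top.2 hc0) hI)
        (ENNReal.inv_ne_top.2 hv0)
  obtain ⟨u, hu, hdisj, hcov⟩ := Vitali.exists_disjoint_subfamily_covering_enlargement_closedBall
    {x | c < dyadicMax n f x} (fun x => x) (fun x => (2:ℝ) ^ k x) _ hbound 5 (by norm_num)
  have hcount : u.Countable := by
    apply hdisj.countable_of_nonempty_interior
    intro x _
    exact ⟨x, Metric.ball_subset_interior_closedBall (Metric.mem_ball_self (two_zpow_pos _))⟩
  have hsub : {x | c < dyadicMax n f x} ⊆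
      ⋃ b ∈ u, Metric.closedBall b (5 * (2:ℝ) ^ k b) := by
    intro x hx
    obtain ⟨b, hb, hxb⟩ := hcov x hx
    exact mem_iUnion₂.2 ⟨b, hb, hxb (Metric.mem_closedBall_self (two_zpow_pos _).le)⟩
  have hball : ∀ b ∈ u, volume (Metric.closedBall b (5 * (2:ℝ) ^ k b)) ≤
      5 ^ n * c⁻¹ * ∫⁻ y in Metric.closedBall b ((2:ℝ) ^ k b), f y := by
    intro b hb
    have h2 := hk b (hu hb)
    rw [volume_closedBall_eq b (by positivity)] at h2 ⊢
    rw [ENNReal.ofReal_mul (by norm_num), mul_pow, mul_assoc, mul_assoc,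
      show ENNReal.ofReal 5 = 5 by simp]
    refine mul_le_mul_right ?_ _
    rw [mul_comm c⁻¹, ← div_eq_mul_inv, ENNReal.le_div_iff_mul_le (Or.inl hc0) (Or.inl hc)]
    rwa [mul_comm]
  calc volume {x | c < dyadicMax n f x}
      ≤ volume (⋃ b ∈ u, Metric.closedBall b (5 * (2:ℝ) ^ k b)) := measure_mono hsub
    _ ≤ ∑' b : u, volume (Metric.closedBall (b : Rn n) (5 * (2:ℝ) ^ k b)) :=
        measure_biUnion_le _ hcount _
    _ ≤ ∑' b : u, 5 ^ n * c⁻¹ * ∫⁻ y in Metric.closedBall (b : Rn n) ((2:ℝ) ^ k b), f y :=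
        ENNReal.tsum_le_tsum fun b => hball b b.2
    _ = 5 ^ n * c⁻¹ * ∫⁻ y in ⋃ b ∈ u, Metric.closedBall b ((2:ℝ) ^ k b), f y := by
        rw [ENNReal.tsum_mul_left, lintegral_biUnion hcount
          (fun _ _ => Metric.isClosed_closedBall.measurableSet) hdisj]
    _ ≤ _ := by gcongr; exact Measure.restrict_le_self

theorem setLIntegral_Ioo_rpow {κ : ℝ} (hκ : 0 < κ) {Y : ℝ} (hY : 0 ≤ Y) :
    ∫⁻ t in Ioo 0 Y, ENNReal.ofReal (κ * t ^ (κ - 1)) = ENNReal.ofReal (Y ^ κ) := by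
  have hint : IntervalIntegrable (fun t : ℝ => κ * t ^ (κ - 1)) volume 0 Y :=
    (intervalIntegral.intervalIntegrable_rpow' (by linarith)).const_mul κ
  rw [← ofReal_integral_eq_lintegral_ofReal]
  · rw [← integral_Ioc_eq_integral_Ioo, ← intervalIntegral.integral_of_le hY,
      intervalIntegral.integral_const_mul, integral_rpow (Or.inl (by linarith))]
    congr 1
    rw [sub_add_cancel, Real.zero_rpow hκ.ne']
    field_simp
    ring
  · exact (((intervalIntegrable_iff_integrableOn_Ioc_of_le hY).1 hint).mono_set Ioo_subset_Ioc_self)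
  · refine (ae_restrict_iff' measurableSet_Ioo).2 (ae_of_all _ fun t ht => ?_)
    have := ht.1
    positivity

/-- Layer cake formula for a power of a single extended nonnegative number. -/
theorem lintegral_indicator_rpow {κ : ℝ} (hκ : 0 < κ) (y : ℝ≥0∞) :
    ∫⁻ t in Ioi (0:ℝ), ENNReal.ofReal (κ * t ^ (κ - 1)) *
      {t : ℝ | ENNReal.ofReal t < y}.indicator 1 t = y ^ κ := by
  have hfin : ∀ Y : ℝ, 0 ≤ Y → ∫⁻ t in Ioi (0:ℝ), ENNReal.ofReal (κ * t ^ (κ - 1)) *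
      {t : ℝ | ENNReal.ofReal t < ENNReal.ofReal Y}.indicator 1 t = ENNReal.ofReal Y ^ κ := by
    intro Y hY
    rw [ENNReal.ofReal_rpow_of_nonneg hY hκ.le, ← setLIntegral_Ioo_rpow hκ hY,
      ← lintegral_indicator measurableSet_Ioi, ← lintegral_indicator measurableSet_Ioo]
    congr 1
    ext t
    by_cases h0 : 0 < t
    · by_cases h1 : t < Y
      · have : ENNReal.ofReal t < ENNReal.ofReal Y :=
          (ENNReal.ofReal_lt_ofReal_iff (h0.trans h1)).2 h1
        simp [h0, h1, this]
      · have : ¬ ENNReal.ofReal t < ENNReal.ofReal Y :=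
          not_lt.2 (ENNReal.ofReal_le_ofReal (not_lt.1 h1))
        simp [h0, h1, this]
    · simp [h0]
  induction y with
  | top =>
    rw [ENNReal.top_rpow_of_pos hκ]
    refine ENNReal.eq_top_of_forall_nnreal_le fun r => ?_
    have h := hfin ((r : ℝ) ^ κ⁻¹) (by positivity)
    rw [ENNReal.ofReal_rpow_of_nonneg (by positivity) hκ.le, ← Real.rpow_mul r.coe_nonneg,
      inv_mul_cancel₀ hκ.ne', Real.rpow_one, ENNReal.ofReal_coe_nnreal] at h
    rw [← h]
    refine lintegral_mono fun t => mul_le_mul_right ?_ _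
    refine indicator_le_indicator_of_subset (fun s _ => ?_) (fun _ => zero_le) t
    exact ENNReal.ofReal_lt_top (r := s)
  | coe Y =>
    have := hfin Y Y.2
    rwa [ENNReal.ofReal_coe_nnreal] at this

theorem ENNReal_mul_rpow_sub_one {κ : ℝ} (hκ : 1 < κ) (y : ℝ≥0∞) : y * y ^ (κ - 1) = y ^ κ := by
  nth_rewrite 1 [← ENNReal.rpow_one y]
  rw [← ENNReal.rpow_add_of_nonneg _ _ zero_le_one (by linarith)]
  congr 1; ring

/-- The maximal function is bounded on `L^κ` for `κ > 1`. -/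
theorem dyadicMax_strong {n : ℕ} (hn : n ≠ 0) {κ : ℝ} (hκ : 1 < κ) :
    ∃ A : ℝ≥0∞, A ≠ ∞ ∧ ∀ f : Rn n → ℝ≥0∞, Measurable f →
      ∫⁻ x, dyadicMax n f x ^ κ ≤ A * ∫⁻ x, f x ^ κ := by
  have hκ0 : 0 < κ := by linarith
  have hκ1 : 0 < κ - 1 := by linarith
  refine ⟨2 * 5 ^ n * ENNReal.ofReal (κ / (κ - 1)) * 2 ^ (κ - 1), ?_, ?_⟩
  · refine ENNReal.mul_ne_top (ENNReal.mul_ne_top ?_ ENNReal.ofReal_ne_top)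
      (ENNReal.rpow_ne_top_of_nonneg hκ1.le (by simp))
    exact ENNReal.mul_ne_top (by simp) (by simp)
  intro f hf
  have hM := measurable_dyadicMax hf
  have hweak : ∀ t ∈ Ioi (0:ℝ), volume {x | ENNReal.ofReal t < dyadicMax n f x} ≤
      2 * 5 ^ n * (ENNReal.ofReal t)⁻¹ *
        ∫⁻ x, f x * {x | ENNReal.ofReal t < 2 * f x}.indicator 1 x := by
    intro t ht
    have ht : 0 < t := ht
    have hmeas : Measurable fun x => f x * {x | ENNReal.ofReal t < 2 * f x}.indicator 1 x := by
      refine hf.mul (measurable_one.indicator ?_)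
      exact measurableSet_lt measurable_const (hf.const_mul 2)
    have h2 : ENNReal.ofReal t = 2 * ENNReal.ofReal (t / 2) := by
      rw [show (2:ℝ≥0∞) = ENNReal.ofReal 2 by simp, ← ENNReal.ofReal_mul (by norm_num)]
      congr 1; ring
    have hsub : {x | ENNReal.ofReal t < dyadicMax n f x} ⊆
        {x | ENNReal.ofReal (t / 2) <
          dyadicMax n (fun x => f x * {x | ENNReal.ofReal t < 2 * f x}.indicator 1 x) x} := by
      intro x hx
      have h1 : dyadicMax n f x ≤
          dyadicMax n (fun x => f x * {x | ENNReal.ofReal t < 2 * f x}.indicator 1 x) x +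
            ENNReal.ofReal (t / 2) := by
        refine le_trans (dyadicMax_mono (g := fun x =>
          f x * {x | ENNReal.ofReal t < 2 * f x}.indicator 1 x + ENNReal.ofReal (t / 2))
          (fun y => ?_) x) ((dyadicMax_add_le hmeas x).trans ?_)
        · by_cases hy : ENNReal.ofReal t < 2 * f y
          · simp [hy]
          · have : f y ≤ ENNReal.ofReal (t / 2) := by
              rw [h2, not_lt] at hy
              exact (ENNReal.mul_le_mul_iff_right (by simp) (by simp)).1 hy
            simp [hy, this]
        · gcongr
          exact dyadicMax_le_of_le (fun _ => le_rfl) x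
      have hx : ENNReal.ofReal t < dyadicMax n f x := hx
      change ENNReal.ofReal (t / 2) < _
      by_contra hcon
      rw [not_lt] at hcon
      refine absurd (hx.trans_le (h1.trans (add_le_add_left hcon _))) ?_
      rw [← two_mul, ← h2]
      exact lt_irrefl _
    have ht2 : ENNReal.ofReal (t / 2) ≠ 0 := by simp [ht]
    refine (measure_mono hsub).trans ((dyadicMax_weak hn _ ht2 ENNReal.ofReal_ne_top).trans ?_)
    refine le_of_eq ?_
    have hinv : (ENNReal.ofReal (t / 2))⁻¹ = 2 * (ENNReal.ofReal t)⁻¹ := by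
      rw [h2, ENNReal.mul_inv (by simp) (by simp), ← mul_assoc,
        ENNReal.mul_inv_cancel (by simp) (by simp), one_mul]
    rw [hinv]
    ring
  have hmeas1 : Measurable (Function.uncurry fun (x : Rn n) (t : ℝ) =>
      ENNReal.ofReal (κ * t ^ (κ - 1)) *
        {t : ℝ | ENNReal.ofReal t < dyadicMax n f x}.indicator 1 t) := by
    refine Measurable.mul (by fun_prop) ?_
    exact (measurable_one.indicator (s := {q : Rn n × ℝ | ENNReal.ofReal q.2 < dyadicMax n f q.1})
      (measurableSet_lt (by fun_prop) (hM.comp measurable_fst)))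
  have hmeas2 : Measurable (Function.uncurry fun (t : ℝ) (x : Rn n) =>
      2 * 5 ^ n * (ENNReal.ofReal (κ * t ^ (κ - 1 - 1)) * (f x *
        {x | ENNReal.ofReal t < 2 * f x}.indicator 1 x))) := by
    refine Measurable.const_mul (Measurable.mul (by fun_prop) ((hf.comp measurable_snd).mul ?_)) _
    exact (measurable_one.indicator (s := {q : ℝ × Rn n | ENNReal.ofReal q.1 < 2 * f q.2})
      (measurableSet_lt (by fun_prop) ((hf.comp measurable_snd).const_mul 2)))
  calc ∫⁻ x, dyadicMax n f x ^ κ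
      = ∫⁻ x, ∫⁻ t in Ioi (0:ℝ), ENNReal.ofReal (κ * t ^ (κ - 1)) *
          {t : ℝ | ENNReal.ofReal t < dyadicMax n f x}.indicator 1 t := by
        simp_rw [lintegral_indicator_rpow hκ0]
    _ = ∫⁻ t in Ioi (0:ℝ), ∫⁻ x, ENNReal.ofReal (κ * t ^ (κ - 1)) *
          {t : ℝ | ENNReal.ofReal t < dyadicMax n f x}.indicator 1 t :=
        lintegral_lintegral_swap hmeas1.aemeasurable
    _ ≤ ∫⁻ t in Ioi (0:ℝ), ∫⁻ x, 2 * 5 ^ n * (ENNReal.ofReal (κ * t ^ (κ - 1 - 1)) * (f x *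
          {x | ENNReal.ofReal t < 2 * f x}.indicator 1 x)) := by
        refine setLIntegral_mono' measurableSet_Ioi fun t ht => ?_
        have ht0 : 0 < t := ht
        rw [lintegral_const_mul' _ _ ENNReal.ofReal_ne_top,
          lintegral_const_mul' _ _ (ENNReal.mul_ne_top (by simp) (by simp)),
          lintegral_const_mul' _ _ ENNReal.ofReal_ne_top]
        have e1 : ∫⁻ x, {t : ℝ | ENNReal.ofReal t < dyadicMax n f x}.indicator (1 : ℝ → ℝ≥0∞) t =
            volume {x | ENNReal.ofReal t < dyadicMax n f x} := by
          rw [← lintegral_indicator_one (measurableSet_lt measurable_const hM)]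
          rfl
        rw [e1]
        refine (mul_le_mul_right (hweak t ht) _).trans (le_of_eq ?_)
        have e2 : ENNReal.ofReal (κ * t ^ (κ - 1)) * (ENNReal.ofReal t)⁻¹ =
            ENNReal.ofReal (κ * t ^ (κ - 1 - 1)) := by
          rw [← ENNReal.ofReal_inv_of_pos ht0, ← ENNReal.ofReal_mul (by positivity), mul_assoc,
            Real.rpow_sub_one ht0.ne' (κ - 1), div_eq_mul_inv]
        rw [← e2]
        ring
    _ = ∫⁻ x, ∫⁻ t in Ioi (0:ℝ), 2 * 5 ^ n * (ENNReal.ofReal (κ * t ^ (κ - 1 - 1)) * (f x *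
          {x | ENNReal.ofReal t < 2 * f x}.indicator 1 x)) :=
        lintegral_lintegral_swap hmeas2.aemeasurable
    _ = ∫⁻ x, 2 * 5 ^ n * ENNReal.ofReal (κ / (κ - 1)) * 2 ^ (κ - 1) * f x ^ κ := by
        congr 1
        ext x
        have e3 : ∀ t : ℝ, 2 * 5 ^ n * (ENNReal.ofReal (κ * t ^ (κ - 1 - 1)) * (f x *
          {x | ENNReal.ofReal t < 2 * f x}.indicator 1 x)) =
          (2 * 5 ^ n * ENNReal.ofReal (κ / (κ - 1)) * f x) *
            (ENNReal.ofReal ((κ - 1) * t ^ (κ - 1 - 1)) *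
              {t : ℝ | ENNReal.ofReal t < 2 * f x}.indicator 1 t) := by
          intro t
          have : ENNReal.ofReal (κ * t ^ (κ - 1 - 1)) = ENNReal.ofReal (κ / (κ - 1)) *
              ENNReal.ofReal ((κ - 1) * t ^ (κ - 1 - 1)) := by
            rw [← ENNReal.ofReal_mul (by positivity)]
            congr 1
            field_simp
          rw [this]
          change _ = (2 * 5 ^ n * ENNReal.ofReal (κ / (κ - 1)) * f x) *
            (ENNReal.ofReal ((κ - 1) * t ^ (κ - 1 - 1)) *
              {x | ENNReal.ofReal t < 2 * f x}.indicator 1 x)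
          ring
        simp_rw [e3]
        rw [lintegral_const_mul'', lintegral_indicator_rpow hκ1,
          ENNReal.mul_rpow_of_nonneg _ _ hκ1.le, ← ENNReal_mul_rpow_sub_one hκ (f x)]
        · ring
        · refine AEMeasurable.mul (by fun_prop) ?_
          exact (measurable_one.indicator
            (measurableSet_lt ENNReal.measurable_ofReal measurable_const)).aemeasurable
    _ = _ := by
        rw [lintegral_const_mul _ (hf.pow_const κ)]

/-- Changing the exponent of a number in `[0,1]` under a log-Hölder decay condition. -/
theorem rpow_le_mul_rpow_add_of_decay {t : ℝ≥0∞} (ht : t ≤ 1) {a b C N L : ℝ}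
    (hL : Real.exp 1 ≤ L) (ha : 1 ≤ a) (h : |a - b| ≤ C / Real.log L) (hN : 0 ≤ N) :
    t ^ a ≤ ENNReal.ofReal (Real.exp (N * C)) * t ^ b + ENNReal.ofReal (L ^ (-N)) := by
  have hL0 : 0 < L := (Real.exp_pos 1).trans_le hL
  have hlog : 1 ≤ Real.log L := (Real.le_log_iff_exp_le hL0).2 hL
  obtain ⟨s, hs0, rfl⟩ : ∃ s : ℝ, 0 ≤ s ∧ t = ENNReal.ofReal s :=
    ⟨t.toReal, ENNReal.toReal_nonneg,
      (ENNReal.ofReal_toReal (ht.trans_lt ENNReal.one_lt_top).ne).symm⟩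
  have ht' : s ≤ 1 := ENNReal.ofReal_le_one.1 ht
  by_cases hcase : s < L ^ (-N)
  · refine le_trans ?_ le_add_self
    rw [ENNReal.ofReal_rpow_of_nonneg hs0 (by linarith)]
    refine ENNReal.ofReal_le_ofReal (le_trans ?_ hcase.le)
    exact Real.rpow_le_self_of_le_one hs0 ht' ha
  · refine le_trans ?_ le_self_add
    push Not at hcase
    have hs : 0 < s := (Real.rpow_pos_of_pos hL0 _).trans_le hcase
    rw [ENNReal.ofReal_rpow_of_pos hs, ENNReal.ofReal_rpow_of_pos hs,
      ← ENNReal.ofReal_mul (Real.exp_pos _).le]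
    refine ENNReal.ofReal_le_ofReal ?_
    have hlogs : -(N * Real.log L) ≤ Real.log s := by
      have := Real.log_le_log (Real.rpow_pos_of_pos hL0 _) hcase
      rw [Real.log_rpow hL0] at this
      linarith
    have hlogs0 : Real.log s ≤ 0 := Real.log_nonpos hs0 ht'
    have e1 : s ^ a = s ^ (a - b) * s ^ b := by
      rw [← Real.rpow_add hs]; congr 1; ring
    rw [e1]
    refine mul_le_mul_of_nonneg_right ?_ (Real.rpow_nonneg hs0 _)
    rw [Real.rpow_def_of_pos hs]
    refine Real.exp_le_exp.2 ?_
    calc Real.log s * (a - b) ≤ |Real.log s * (a - b)| := le_abs_self _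
      _ = |Real.log s| * |a - b| := abs_mul _ _
      _ ≤ (N * Real.log L) * (C / Real.log L) := by
          refine mul_le_mul ?_ h (abs_nonneg _) (by positivity)
          rw [abs_of_nonpos hlogs0]; linarith
      _ = N * C := by field_simp

/-- The Jensen inequality for dyadic ball averages. -/
theorem rpow_average_le {n : ℕ} {f : Rn n → ℝ≥0∞} (hf : Measurable f) {m : ℝ} (hm : 1 ≤ m)
    (x : Rn n) (k : ℤ) :
    ((volume (Metric.closedBall x ((2:ℝ) ^ k)))⁻¹ *
      ∫⁻ y in Metric.closedBall x ((2:ℝ) ^ k), f y) ^ m ≤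
    (volume (Metric.closedBall x ((2:ℝ) ^ k)))⁻¹ *
      ∫⁻ y in Metric.closedBall x ((2:ℝ) ^ k), f y ^ m := by
  have hm0 : 0 < m := by linarith
  set B := Metric.closedBall x ((2:ℝ) ^ k)
  set ν : Measure (Rn n) := (volume B)⁻¹ • volume.restrict B
  have : IsProbabilityMeasure ν := ⟨by
    simp only [ν, Measure.smul_apply, Measure.restrict_apply_univ, smul_eq_mul]
    exact ENNReal.inv_mul_cancel (volume_dyadic_ne_zero x k) (volume_dyadic_ne_top x k)⟩
  have h := eLpNorm'_le_eLpNorm'_of_exponent_le (μ := ν) (f := f) one_pos hm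
    hf.aestronglyMeasurable
  simp only [eLpNorm'_eq_lintegral_enorm, enorm_eq_self, ENNReal.rpow_one, div_one] at h
  have h2 := ENNReal.rpow_le_rpow h hm0.le
  rw [← ENNReal.rpow_mul, one_div, inv_mul_cancel₀ hm0.ne', ENNReal.rpow_one] at h2
  simpa [ν, lintegral_smul_measure] using h2

/-- Pointwise variable-exponent Jensen estimate for functions with values in `{0} ∪ [1,∞]`. -/
theorem dyadicMax_rpow_le {n : ℕ} {a : Rn n → ℝ} {C Am : ℝ} (hC : 0 ≤ C) {f : Rn n → ℝ≥0∞}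
    (hf : Measurable f) (hf1 : ∀ y, f y = 0 ∨ 1 ≤ f y)
    (ha1 : ∀ᵐ y, 1 ≤ a y) (hint : ∫⁻ y, f y ^ a y ≤ 1) {x : Rn n} (hx1 : 1 ≤ a x) (hxA : a x ≤ Am)
    (hx : ∀ᵐ y, x ≠ y → |a x - a y| ≤ C / Real.log (Real.exp 1 + 1 / ‖x - y‖)) :
    dyadicMax n f x ^ a x ≤
      ENNReal.ofReal (Real.exp (n * C)) * (max 1 (volume (Metric.ball (0 : Rn n) 1))⁻¹) ^ Am *
        dyadicMax n (fun y => f y ^ a y) x := by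
  have hax0 : 0 < a x := by linarith
  rw [← ENNReal.le_rpow_inv_iff hax0]
  refine iSup_le fun k => ?_
  rw [ENNReal.le_rpow_inv_iff hax0]
  refine le_trans ?_ (mul_le_mul_right (le_iSup (fun k : ℤ =>
    (volume (Metric.closedBall x ((2:ℝ) ^ k)))⁻¹ *
      ∫⁻ y in Metric.closedBall x ((2:ℝ) ^ k), f y ^ a y) k) _)
  set R : ℝ := (2:ℝ) ^ k with hR
  have hR0 : 0 < R := two_zpow_pos k
  set L : ℝ := Real.exp 1 + 1 / R with hL
  have hLe : Real.exp 1 ≤ L := by rw [hL]; linarith [one_div_pos.2 hR0]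
  have hL0 : 0 < L := (Real.exp_pos 1).trans_le hLe
  have hlog : 1 ≤ Real.log L := (Real.le_log_iff_exp_le hL0).2 hLe
  have hω : 0 ≤ C / Real.log L := by positivity
  set m : ℝ := max 1 (a x - C / Real.log L) with hm
  have hm1 : 1 ≤ m := le_max_left _ _
  have hmx : m ≤ a x := max_le hx1 (by linarith)
  have hm0 : 0 < m := by linarith
  have hma : ∀ᵐ y, y ∈ Metric.closedBall x R → f y ^ m ≤ f y ^ a y := by
    filter_upwards [ha1, hx] with y hy1 hy hyB
    have hmy : m ≤ a y := by
      refine max_le hy1 ?_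
      by_cases hxy : x = y
      · rw [← hxy]; linarith
      · have h1 := (abs_le.1 (hy hxy)).2
        have hpos : 0 < ‖x - y‖ := norm_pos_iff.2 (sub_ne_zero.2 hxy)
        have hle : ‖x - y‖ ≤ R := by
          rw [Metric.mem_closedBall, dist_comm, dist_eq_norm] at hyB
          exact hyB
        have h2 : Real.log L ≤ Real.log (Real.exp 1 + 1 / ‖x - y‖) := by
          apply Real.log_le_log hL0
          rw [hL]
          gcongr
        have h3 : C / Real.log (Real.exp 1 + 1 / ‖x - y‖) ≤ C / Real.log L := by gcongr
        linarith
    rcases hf1 y with h0 | h1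
    · rw [h0, ENNReal.zero_rpow_of_pos hm0]; exact zero_le
    · exact ENNReal.rpow_le_rpow_of_exponent_le h1 hmy
  set A := (volume (Metric.closedBall x R))⁻¹ * ∫⁻ y in Metric.closedBall x R, f y
  set D := (volume (Metric.closedBall x R))⁻¹ * ∫⁻ y in Metric.closedBall x R, f y ^ a y with hD
  have hAD : A ^ m ≤ D := by
    refine (rpow_average_le hf hm1 x k).trans ?_
    refine mul_le_mul_right ?_ _
    exact lintegral_mono_ae ((ae_restrict_iff' Metric.isClosed_closedBall.measurableSet).2 hma)
  set e := a x / m - 1 with he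
  have he0 : 0 ≤ e := by
    rw [he, sub_nonneg, le_div_iff₀ hm0]; linarith
  have heω : e ≤ C / Real.log L := by
    rw [he, div_sub_one hm0.ne', div_le_iff₀ hm0]
    have : a x - m ≤ C / Real.log L := by
      have := le_max_right 1 (a x - C / Real.log L)
      linarith
    nlinarith
  have heA : e ≤ Am := by
    have : a x / m ≤ a x := div_le_self hax0.le hm1
    linarith
  have h1 : A ^ a x ≤ D * D ^ e := by
    calc A ^ a x = (A ^ m) ^ (a x / m) := by
          rw [← ENNReal.rpow_mul]; congr 1; field_simp
      _ ≤ D ^ (a x / m) := ENNReal.rpow_le_rpow hAD (by positivity)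
      _ = D ^ (1 + e) := by congr 1; rw [he]; ring
      _ = D * D ^ e := by rw [ENNReal.rpow_add_of_nonneg _ _ zero_le_one he0, ENNReal.rpow_one]
  set W := max 1 (volume (Metric.ball (0 : Rn n) 1))⁻¹
  have hDW : D ≤ ENNReal.ofReal (L ^ n) * W := by
    have hv : (volume (Metric.closedBall x R))⁻¹ ≤ ENNReal.ofReal (L ^ n) * W := by
      rw [volume_closedBall_eq x hR0.le, ENNReal.mul_inv
        (Or.inr measure_ball_lt_top.ne) (Or.inr (Metric.measure_ball_pos _ _ one_pos).ne'),
        ENNReal.inv_pow, ← ENNReal.ofReal_inv_of_pos hR0, ← ENNReal.ofReal_pow (by positivity)]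
      refine mul_le_mul' (ENNReal.ofReal_le_ofReal ?_) (le_max_right _ _)
      gcongr
      rw [hL, one_div]
      linarith [Real.exp_pos 1]
    calc D ≤ (volume (Metric.closedBall x R))⁻¹ * 1 := by
          refine mul_le_mul_right ?_ _
          exact (setLIntegral_le_lintegral _ _).trans hint
      _ ≤ _ := by rwa [mul_one]
  have h2 : D ^ e ≤ ENNReal.ofReal (Real.exp (n * C)) * W ^ Am := by
    refine (ENNReal.rpow_le_rpow hDW he0).trans ?_
    rw [ENNReal.mul_rpow_of_nonneg _ _ he0]
    refine mul_le_mul' ?_ (ENNReal.rpow_le_rpow_of_exponent_le (le_max_left _ _) heA)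
    rw [ENNReal.ofReal_rpow_of_pos (by positivity)]
    refine ENNReal.ofReal_le_ofReal ?_
    rw [Real.rpow_def_of_pos (by positivity), Real.log_pow]
    refine Real.exp_le_exp.2 ?_
    calc n * Real.log L * e ≤ n * Real.log L * (C / Real.log L) := by gcongr
      _ = n * C := by field_simp
  calc A ^ a x ≤ D * D ^ e := h1
    _ ≤ D * (ENNReal.ofReal (Real.exp (n * C)) * W ^ Am) := by gcongr
    _ = _ := mul_comm _ _

theorem lintegral_decay_ne_top (n : ℕ) :
    ∫⁻ x : Rn n, ENNReal.ofReal ((Real.exp 1 + ‖x‖) ^ (-((n:ℝ) + 1))) ≠ ∞ := by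
  have h : Integrable (fun x : Rn n => (1 + ‖x‖) ^ (-((n:ℝ) + 1))) :=
    integrable_one_add_norm (by simp)
  refine ((lintegral_mono fun x => ENNReal.ofReal_le_ofReal ?_).trans_lt h.lintegral_lt_top).ne
  have : (1:ℝ) ≤ Real.exp 1 := Real.one_le_exp zero_le_one
  exact Real.rpow_le_rpow_of_nonpos (by positivity) (by gcongr) (by linarith [n.cast_nonneg (α := ℝ)])

/-- The maximal operator is (modularly) bounded on `L^{q(·)}` for log-Hölder exponents. -/
theorem dyadicMax_variable {n : ℕ} (hn : n ≠ 0) {q : Rn n → ℝ} (hq : Measurable q)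
    {qm Q qinf C₁ C₂ : ℝ} (hqm1 : 1 < qm) (hqm : ∀ᵐ x, qm ≤ q x) (hQ : ∀ᵐ x, q x ≤ Q)
    (hqinf : 1 < qinf) (hC₁ : 0 ≤ C₁)
    (hloc : ∀ᵐ x, ∀ᵐ y, x ≠ y → |q x - q y| ≤ C₁ / Real.log (Real.exp 1 + 1 / ‖x - y‖))
    (hdecay : ∀ᵐ x : Rn n, |q x - qinf| ≤ C₂ / Real.log (Real.exp 1 + ‖x‖)) :
    ∃ K : ℝ≥0∞, K ≠ ∞ ∧ ∀ f : Rn n → ℝ≥0∞, Measurable f → ∫⁻ x, f x ^ q x ≤ 1 →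
      ∫⁻ x, dyadicMax n f x ^ q x ≤ K := by
  set κ := (1 + qm) / 2 with hκ
  have hκ1 : 1 < κ := by rw [hκ]; linarith
  have hκ0 : 0 < κ := by linarith
  have hκq : κ ≤ qm := by rw [hκ]; linarith
  obtain ⟨A, hA, hAf⟩ := dyadicMax_strong hn hκ1
  obtain ⟨A', hA', hAf'⟩ := dyadicMax_strong hn hqinf
  set J := ∫⁻ x : Rn n, ENNReal.ofReal ((Real.exp 1 + ‖x‖) ^ (-((n:ℝ) + 1)))
  have hJ : J ≠ ∞ := lintegral_decay_ne_top n
  set c := ENNReal.ofReal (Real.exp (((n:ℝ) + 1) * C₂))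
  set K₁ := ENNReal.ofReal (Real.exp (n * (C₁ / κ))) *
    (max 1 (volume (Metric.ball (0 : Rn n) 1))⁻¹) ^ (|Q|)
  have hK₁ : K₁ ≠ ∞ := by
    refine ENNReal.mul_ne_top ENNReal.ofReal_ne_top (ENNReal.rpow_ne_top_of_nonneg (abs_nonneg _) ?_)
    refine (max_lt ENNReal.one_lt_top ?_).ne
    exact (ENNReal.inv_ne_top.2 (Metric.measure_ball_pos _ _ one_pos).ne').lt_top
  have hN : (0:ℝ) ≤ (n:ℝ) + 1 := by positivity
  refine ⟨2 ^ (|Q|) * (K₁ ^ κ * A + (c * (A' * (c + J)) + J)), ?_, ?_⟩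
  · refine ENNReal.mul_ne_top (ENNReal.rpow_ne_top_of_nonneg (abs_nonneg _) (by simp)) ?_
    refine ENNReal.add_ne_top.2 ⟨ENNReal.mul_ne_top (ENNReal.rpow_ne_top_of_nonneg hκ0.le hK₁) hA,
      ENNReal.add_ne_top.2 ⟨ENNReal.mul_ne_top ENNReal.ofReal_ne_top (ENNReal.mul_ne_top hA' ?_), hJ⟩⟩
    exact ENNReal.add_ne_top.2 ⟨ENNReal.ofReal_ne_top, hJ⟩
  intro f hf hint
  set f₁ : Rn n → ℝ≥0∞ := {y | 1 ≤ f y}.indicator f with hf₁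
  set f₂ : Rn n → ℝ≥0∞ := {y | 1 ≤ f y}ᶜ.indicator f with hf₂
  have hset : MeasurableSet {y | 1 ≤ f y} := measurableSet_le measurable_const hf
  have hf₁m : Measurable f₁ := hf.indicator hset
  have hf₂m : Measurable f₂ := hf.indicator hset.compl
  have hsum : f = fun y => f₁ y + f₂ y := (indicator_self_add_compl _ f).symm
  have hf₁le : ∀ y, f₁ y ≤ f y := indicator_le_self _ f
  have hf₂le : ∀ y, f₂ y ≤ f y := indicator_le_self _ f
  have hf₁one : ∀ y, f₁ y = 0 ∨ 1 ≤ f₁ y := by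
    intro y
    by_cases hy : 1 ≤ f y
    · right
      rw [hf₁, indicator_of_mem (show y ∈ {y | 1 ≤ f y} from hy)]; exact hy
    · left
      exact indicator_of_notMem (show y ∉ {y | 1 ≤ f y} from hy) f
  have hf₂one : ∀ y, f₂ y ≤ 1 := by
    intro y
    by_cases hy : 1 ≤ f y
    · rw [hf₂, indicator_of_notMem (show y ∉ {y | 1 ≤ f y}ᶜ from fun h => h hy)]
      exact zero_le
    · rw [hf₂, indicator_of_mem (show y ∈ {y | 1 ≤ f y}ᶜ from hy)]; exact (not_le.1 hy).le
  -- the part of `f` that is large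
  set a : Rn n → ℝ := fun y => q y / κ with ha
  have ham : Measurable a := hq.div_const κ
  have hP₁ : ∫⁻ x, dyadicMax n f₁ x ^ q x ≤ K₁ ^ κ * A := by
    have hint₁ : ∫⁻ y, f₁ y ^ a y ≤ 1 := by
      refine le_trans (lintegral_mono_ae ?_) hint
      filter_upwards [hqm] with y hy
      have hqy : 0 < q y := by linarith
      rcases hf₁one y with h0 | h1
      · rw [h0, ENNReal.zero_rpow_of_pos (div_pos hqy hκ0)]; exact zero_le
      · exact (ENNReal.rpow_le_rpow_of_exponent_le h1 (div_le_self hqy.le hκ1.le)).trans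
          (ENNReal.rpow_le_rpow (hf₁le y) hqy.le)
    have ha1 : ∀ᵐ y, 1 ≤ a y := by
      filter_upwards [hqm] with y hy
      rw [ha, le_div_iff₀ hκ0]; linarith
    calc ∫⁻ x, dyadicMax n f₁ x ^ q x
        ≤ ∫⁻ x, K₁ ^ κ * dyadicMax n (fun y => f₁ y ^ a y) x ^ κ := by
          refine lintegral_mono_ae ?_
          filter_upwards [hqm, hQ, ha1, hloc] with x hx hxQ hxa hxloc
          have hb := dyadicMax_rpow_le (C := C₁ / κ) (Am := |Q|) (by positivity) hf₁m hf₁one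
            ha1 hint₁ hxa ?_ ?_
          · have := ENNReal.rpow_le_rpow hb hκ0.le
            rw [← ENNReal.rpow_mul, ENNReal.mul_rpow_of_nonneg _ _ hκ0.le] at this
            rwa [show a x * κ = q x from div_mul_cancel₀ _ hκ0.ne'] at this
          · refine (div_le_self (by linarith) hκ1.le).trans (hxQ.trans (le_abs_self Q))
          · filter_upwards [hxloc] with y hy hxy
            rw [ha, div_right_comm]
            change |q x / κ - q y / κ| ≤ _
            rw [← sub_div, abs_div, abs_of_pos hκ0]
            exact div_le_div_of_nonneg_right (hy hxy) hκ0.le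
      _ ≤ K₁ ^ κ * (A * ∫⁻ x, (f₁ x ^ a x) ^ κ) := by
          rw [lintegral_const_mul' _ _ (ENNReal.rpow_ne_top_of_nonneg hκ0.le hK₁)]
          gcongr
          exact hAf _ (hf₁m.pow ham)
      _ ≤ K₁ ^ κ * (A * 1) := by
          gcongr
          refine le_trans (lintegral_mono_ae ?_) hint
          filter_upwards [hqm] with x hx
          rw [← ENNReal.rpow_mul, show a x * κ = q x from div_mul_cancel₀ _ hκ0.ne']
          exact ENNReal.rpow_le_rpow (hf₁le x) (by linarith)
      _ = _ := by rw [mul_one]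
  -- the part of `f` that is small
  have hLe : ∀ x : Rn n, Real.exp 1 ≤ Real.exp 1 + ‖x‖ := fun x => by linarith [norm_nonneg x]
  have hJm : Measurable fun x : Rn n =>
      ENNReal.ofReal ((Real.exp 1 + ‖x‖) ^ (-((n:ℝ) + 1))) := by fun_prop
  have hf₂inf : ∫⁻ x, f₂ x ^ qinf ≤ c + J := by
    calc ∫⁻ x, f₂ x ^ qinf ≤ ∫⁻ x, (c * f₂ x ^ q x +
          ENNReal.ofReal ((Real.exp 1 + ‖x‖) ^ (-((n:ℝ) + 1)))) := by
          refine lintegral_mono_ae ?_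
          filter_upwards [hdecay] with x hx
          rw [abs_sub_comm] at hx
          exact rpow_le_mul_rpow_add_of_decay (hf₂one x) (hLe x) hqinf.le hx hN
      _ = c * (∫⁻ x, f₂ x ^ q x) + J := by
          rw [lintegral_add_right _ hJm, lintegral_const_mul' _ _ ENNReal.ofReal_ne_top]
      _ ≤ c * 1 + J := by
          gcongr
          refine le_trans (lintegral_mono_ae ?_) hint
          filter_upwards [hqm] with x hx
          exact ENNReal.rpow_le_rpow (hf₂le x) (by linarith)
      _ = _ := by rw [mul_one]
  have hP₂ : ∫⁻ x, dyadicMax n f₂ x ^ q x ≤ c * (A' * (c + J)) + J := by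
    calc ∫⁻ x, dyadicMax n f₂ x ^ q x ≤ ∫⁻ x, (c * dyadicMax n f₂ x ^ qinf +
          ENNReal.ofReal ((Real.exp 1 + ‖x‖) ^ (-((n:ℝ) + 1)))) := by
          refine lintegral_mono_ae ?_
          filter_upwards [hdecay, hqm] with x hx hxm
          exact rpow_le_mul_rpow_add_of_decay (dyadicMax_le_of_le hf₂one x) (hLe x)
            (by linarith) hx hN
      _ = c * (∫⁻ x, dyadicMax n f₂ x ^ qinf) + J := by
          rw [lintegral_add_right _ hJm, lintegral_const_mul' _ _ ENNReal.ofReal_ne_top]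
      _ ≤ c * (A' * (c + J)) + J := by
          gcongr
          exact (hAf' _ hf₂m).trans (by gcongr)
  calc ∫⁻ x, dyadicMax n f x ^ q x
      ≤ ∫⁻ x, 2 ^ (|Q|) * (dyadicMax n f₁ x ^ q x + dyadicMax n f₂ x ^ q x) := by
        refine lintegral_mono_ae ?_
        filter_upwards [hqm, hQ] with x hx hxQ
        have h1 : dyadicMax n f x ≤ dyadicMax n f₁ x + dyadicMax n f₂ x := by
          conv_lhs => rw [hsum]
          exact dyadicMax_add_le hf₁m x
        refine (ENNReal.rpow_le_rpow h1 (by linarith)).trans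
          ((ENNReal.rpow_add_le_mul_rpow_add_rpow _ _ (by linarith)).trans ?_)
        gcongr
        · exact one_le_two
        · linarith [le_abs_self Q]
    _ = 2 ^ (|Q|) * ((∫⁻ x, dyadicMax n f₁ x ^ q x) + ∫⁻ x, dyadicMax n f₂ x ^ q x) := by
        rw [lintegral_const_mul' _ _ (ENNReal.rpow_ne_top_of_nonneg (abs_nonneg _) (by simp)),
          lintegral_add_left ((measurable_dyadicMax hf₁m).pow hq)]
    _ ≤ _ := by gcongr

theorem setLIntegral_Ioi_rpow {γ : ℝ} (hγ : 0 < γ) {δ : ℝ} (hδ : 0 < δ) :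
    ∫⁻ t in Ioi δ, ENNReal.ofReal (γ * t ^ (-γ - 1)) = ENNReal.ofReal (δ ^ (-γ)) := by
  rw [← ofReal_integral_eq_lintegral_ofReal]
  · rw [integral_const_mul, integral_Ioi_rpow_of_lt (by linarith) hδ, sub_add_cancel]
    congr 1
    field_simp
  · exact (integrableOn_Ioi_rpow_of_lt (by linarith) hδ).const_mul γ
  · refine (ae_restrict_iff' measurableSet_Ioi).2 (ae_of_all _ fun t ht => ?_)
    have : 0 < t := hδ.trans ht
    positivity

theorem setLIntegral_closedBall_le {n : ℕ} {f : Rn n → ℝ≥0∞} (hf : Measurable f) {s : ℝ}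
    (hs : 1 < s) (hint : ∫⁻ y, f y ^ s ≤ 1) {c : ℝ}
    (hc : c = 2 ^ n * max 1 (volume (Metric.ball (0 : Rn n) 1)).toReal)
    (x : Rn n) {R : ℝ} (hR : 0 < R) :
    ∫⁻ y in Metric.closedBall x R, f y ≤ ENNReal.ofReal (c * R ^ (n:ℝ)) * dyadicMax n f x ∧
    ∫⁻ y in Metric.closedBall x R, f y ≤ ENNReal.ofReal (c * R ^ (n - n / s)) := by
  have hs0 : 0 < s := by linarith
  have hc1 : 1 ≤ c := by
    rw [hc]
    exact one_le_mul_of_one_le_of_one_le (one_le_pow₀ one_le_two) (le_max_left _ _)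
  obtain ⟨k, hk1, hk2⟩ := exists_mem_Ico_zpow (y := (2:ℝ)) hR one_lt_two
  set V := volume (Metric.closedBall x ((2:ℝ) ^ (k + 1))) with hV
  have hV0 : V ≠ 0 := volume_dyadic_ne_zero x _
  have hVt : V ≠ ∞ := volume_dyadic_ne_top x _
  have hVle : V ≤ ENNReal.ofReal (c * R ^ (n:ℝ)) := by
    rw [hV, volume_closedBall_eq x (two_zpow_pos _).le, ← ENNReal.ofReal_pow (by positivity),
      ← ENNReal.ofReal_toReal (measure_ball_lt_top (μ := volume) (x := (0 : Rn n)) (r := 1)).ne,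
      ← ENNReal.ofReal_mul (by positivity)]
    refine ENNReal.ofReal_le_ofReal ?_
    have h2 : ((2:ℝ) ^ (k + 1)) ^ n ≤ 2 ^ n * R ^ n := by
      rw [← mul_pow, zpow_add_one₀ two_ne_zero, mul_comm]
      gcongr
    calc _ ≤ (2 ^ n * R ^ n) * max 1 (volume (Metric.ball (0 : Rn n) 1)).toReal := by
          gcongr
          exact le_max_right _ _
      _ = _ := by rw [hc, Real.rpow_natCast]; ring
  set A := V⁻¹ * ∫⁻ y in Metric.closedBall x ((2:ℝ) ^ (k + 1)), f y with hA
  have hball : ∫⁻ y in Metric.closedBall x R, f y ≤ V * A := by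
    rw [hA, ← mul_assoc, ENNReal.mul_inv_cancel hV0 hVt, one_mul]
    exact lintegral_mono_set (Metric.closedBall_subset_closedBall hk2.le)
  refine ⟨hball.trans (mul_le_mul' hVle (le_iSup (fun k : ℤ =>
    (volume (Metric.closedBall x ((2:ℝ) ^ k)))⁻¹ *
      ∫⁻ y in Metric.closedBall x ((2:ℝ) ^ k), f y) (k + 1))), hball.trans ?_⟩
  have hAs : A ^ s ≤ V⁻¹ := by
    refine (rpow_average_le hf hs.le x (k + 1)).trans ?_
    calc _ ≤ V⁻¹ * 1 := by
          refine mul_le_mul_right ?_ _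
          exact (setLIntegral_le_lintegral _ _).trans hint
      _ = V⁻¹ := mul_one _
  have hA' : A ≤ V⁻¹ ^ s⁻¹ := (ENNReal.le_rpow_inv_iff hs0).2 hAs
  have hsi : 0 ≤ 1 - s⁻¹ := sub_nonneg.2 (inv_le_one_of_one_le₀ hs.le)
  calc V * A ≤ V * V⁻¹ ^ s⁻¹ := by gcongr
    _ = V ^ (1 - s⁻¹) := by
        rw [ENNReal.inv_rpow, ← ENNReal.rpow_neg, sub_eq_add_neg, ENNReal.rpow_add _ _ hV0 hVt,
          ENNReal.rpow_one]
    _ ≤ ENNReal.ofReal (c * R ^ (n:ℝ)) ^ (1 - s⁻¹) := ENNReal.rpow_le_rpow hVle hsi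
    _ = ENNReal.ofReal (c ^ (1 - s⁻¹) * R ^ (n - n / s)) := by
        rw [ENNReal.ofReal_rpow_of_pos (by positivity), Real.mul_rpow (by positivity)
          (by positivity), ← Real.rpow_mul hR.le]
        congr 3
        ring
    _ ≤ _ := by
        refine ENNReal.ofReal_le_ofReal ?_
        gcongr
        refine Real.rpow_le_self_of_one_le hc1 ?_
        linarith [inv_pos.2 hs0]

/-- The Hedberg pointwise estimate for the Riesz potential. -/
theorem riesz_le_dyadicMax {n : ℕ} {β s : ℝ} (hβ : 0 < β) (hβn : β < n) (hs : 1 < s)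
    (hβs : β * s < n) :
    ∃ C > (0:ℝ), ∀ f : Rn n → ℝ≥0∞, Measurable f → ∫⁻ y, f y ^ s ≤ 1 → ∀ x,
      ∫⁻ y, ENNReal.ofReal (‖x - y‖ ^ (β - n)) * f y ≤
        ENNReal.ofReal C * dyadicMax n f x ^ (1 - β * s / n) := by
  have hs0 : 0 < s := by linarith
  have hn0 : (0:ℝ) < n := hβ.trans hβn
  set c : ℝ := 2 ^ n * max 1 (volume (Metric.ball (0 : Rn n) 1)).toReal with hc
  have hc0 : 0 < c := by positivity
  have hnβ : 0 < n - β := sub_pos.2 hβn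
  have hns : 0 < n / s - β := by rw [sub_pos, lt_div_iff₀ hs0]; exact hβs
  have hθ : 0 < 1 - β * s / n := by rw [sub_pos, div_lt_one hn0]; exact hβs
  set C : ℝ := (n - β) * c * (1 / β + 1 / (n / s - β)) with hC
  have hC0 : 0 < C := by positivity
  refine ⟨C, hC0, fun f hf hint x => ?_⟩
  have hker : ∀ z : Rn n, ENNReal.ofReal (‖z‖ ^ (β - n)) ≤
      ∫⁻ R in Ioi (0:ℝ), ENNReal.ofReal ((n - β) * R ^ (-(n - β) - 1)) *
        {R : ℝ | ‖z‖ ≤ R}.indicator 1 R := by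
    intro z
    by_cases hz : z = 0
    · rw [hz, norm_zero, Real.zero_rpow (by linarith), ENNReal.ofReal_zero]
      exact zero_le
    have hz0 : 0 < ‖z‖ := norm_pos_iff.2 hz
    rw [show β - n = -(n - β) by ring, ← setLIntegral_Ioi_rpow hnβ hz0]
    calc _ = ∫⁻ R in Ioi ‖z‖, ENNReal.ofReal ((n - β) * R ^ (-(n - β) - 1)) *
        {R : ℝ | ‖z‖ ≤ R}.indicator 1 R := by
          refine setLIntegral_congr_fun measurableSet_Ioi fun R hR => ?_
          have hR' : ‖z‖ ≤ R := le_of_lt hR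
          rw [indicator_of_mem (show R ∈ {R : ℝ | ‖z‖ ≤ R} from hR')]
          simp
      _ ≤ _ := lintegral_mono_set (Ioi_subset_Ioi hz0.le)
  have hmeas : Measurable (Function.uncurry fun (y : Rn n) (R : ℝ) =>
      ENNReal.ofReal ((n - β) * R ^ (-(n - β) - 1)) *
        ({R : ℝ | ‖x - y‖ ≤ R}.indicator 1 R * f y)) := by
    refine Measurable.mul (by fun_prop) (Measurable.mul ?_ (hf.comp measurable_fst))
    exact measurable_one.indicator (s := {q : Rn n × ℝ | ‖x - q.1‖ ≤ q.2})
      (measurableSet_le (by fun_prop) (by fun_prop))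
  have hle : ∫⁻ y, ENNReal.ofReal (‖x - y‖ ^ (β - n)) * f y ≤
      ∫⁻ R in Ioi (0:ℝ), ENNReal.ofReal ((n - β) * R ^ (-(n - β) - 1)) *
        ∫⁻ y in Metric.closedBall x R, f y := by
    calc ∫⁻ y, ENNReal.ofReal (‖x - y‖ ^ (β - n)) * f y
        ≤ ∫⁻ y, ∫⁻ R in Ioi (0:ℝ), ENNReal.ofReal ((n - β) * R ^ (-(n - β) - 1)) *
            ({R : ℝ | ‖x - y‖ ≤ R}.indicator 1 R * f y) := by
          refine lintegral_mono fun y => ?_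
          simp_rw [← mul_assoc]
          rw [lintegral_mul_const'']
          · exact mul_le_mul_left (hker _) _
          · refine AEMeasurable.mul (by fun_prop) ?_
            exact (measurable_one.indicator measurableSet_Ici).aemeasurable
      _ = ∫⁻ R in Ioi (0:ℝ), ∫⁻ y, ENNReal.ofReal ((n - β) * R ^ (-(n - β) - 1)) *
            ({R : ℝ | ‖x - y‖ ≤ R}.indicator 1 R * f y) :=
          lintegral_lintegral_swap hmeas.aemeasurable
      _ = _ := by
          congr 1
          ext R
          rw [lintegral_const_mul' _ _ ENNReal.ofReal_ne_top,
            ← lintegral_indicator Metric.isClosed_closedBall.measurableSet]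
          congr 2
          ext y
          by_cases hy : ‖x - y‖ ≤ R
          · have h2 : y ∈ Metric.closedBall x R := by
              rw [Metric.mem_closedBall, dist_comm, dist_eq_norm]; exact hy
            rw [indicator_of_mem h2, indicator_of_mem (show R ∈ {R : ℝ | ‖x - y‖ ≤ R} from hy)]
            simp
          · have h2 : y ∉ Metric.closedBall x R := by
              rw [Metric.mem_closedBall, dist_comm, dist_eq_norm]; exact hy
            rw [indicator_of_notMem h2,
              indicator_of_notMem (show R ∉ {R : ℝ | ‖x - y‖ ≤ R} from hy)]
            simp
  refine hle.trans ?_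
  have hb := fun R (hR : R ∈ Ioi (0:ℝ)) => setLIntegral_closedBall_le hf hs hint hc x hR
  generalize dyadicMax n f x = M at hb ⊢
  by_cases hM : M = ∞
  · rw [hM, ENNReal.top_rpow_of_pos hθ, ENNReal.mul_top (by simp [hC0])]
    exact le_top
  obtain ⟨m, hm0, rfl⟩ : ∃ m : ℝ, 0 ≤ m ∧ M = ENNReal.ofReal m :=
    ⟨M.toReal, ENNReal.toReal_nonneg, (ENNReal.ofReal_toReal hM).symm⟩
  rcases hm0.eq_or_lt with rfl | hm
  · refine le_of_eq_of_le ?_ zero_le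
    rw [setLIntegral_congr_fun (g := fun _ => 0) measurableSet_Ioi, lintegral_zero]
    intro R hR
    have := (hb R hR).1
    rw [ENNReal.ofReal_zero, mul_zero, nonpos_iff_eq_zero] at this
    simp only [this, mul_zero]
  set δ := m ^ (-(s / n)) with hδ
  have hδ0 : 0 < δ := Real.rpow_pos_of_pos hm _
  have hnear : ∫⁻ R in Ioc 0 δ, ENNReal.ofReal ((n - β) * R ^ (-(n - β) - 1)) *
        ∫⁻ y in Metric.closedBall x R, f y ≤
      ENNReal.ofReal ((n - β) * c * (1 / β) * m ^ (1 - β * s / n)) := by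
    calc _ ≤ ∫⁻ R in Ioc 0 δ, ENNReal.ofReal ((n - β) * c * (1 / β) * m) *
          ENNReal.ofReal (β * R ^ (β - 1)) := by
          refine setLIntegral_mono' measurableSet_Ioc fun R hR => ?_
          have hR0 : 0 < R := hR.1
          refine (mul_le_mul_right (hb R hR.1).1 _).trans (le_of_eq ?_)
          rw [← ENNReal.ofReal_mul (by positivity), ← ENNReal.ofReal_mul (by positivity),
            ← ENNReal.ofReal_mul (by positivity)]
          congr 1
          have : R ^ (β - 1) = R ^ (-(n - β) - 1) * R ^ (n:ℝ) := by
            rw [← Real.rpow_add hR0]; congr 1; ring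
          rw [this]
          field_simp
      _ = _ := by
          rw [lintegral_const_mul' _ _ ENNReal.ofReal_ne_top,
            setLIntegral_congr Ioo_ae_eq_Ioc.symm, setLIntegral_Ioo_rpow hβ hδ0.le,
            ← ENNReal.ofReal_mul (by positivity)]
          congr 1
          have : m ^ (1 - β * s / n) = m * δ ^ β := by
            rw [hδ, ← Real.rpow_mul hm.le, ← Real.rpow_one_add' hm.le]
            · congr 1; ring
            · have e : 1 + -(s / n) * β = 1 - β * s / n := by ring
              rw [e]; exact hθ.ne'
          rw [this]
          ring
  have hfar : ∫⁻ R in Ioi δ, ENNReal.ofReal ((n - β) * R ^ (-(n - β) - 1)) *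
        ∫⁻ y in Metric.closedBall x R, f y ≤
      ENNReal.ofReal ((n - β) * c * (1 / (n / s - β)) * m ^ (1 - β * s / n)) := by
    calc _ ≤ ∫⁻ R in Ioi δ, ENNReal.ofReal ((n - β) * c * (1 / (n / s - β))) *
          ENNReal.ofReal ((n / s - β) * R ^ (-(n / s - β) - 1)) := by
          refine setLIntegral_mono' measurableSet_Ioi fun R hR => ?_
          have hR0 : 0 < R := hδ0.trans hR
          refine (mul_le_mul_right (hb R hR0).2 _).trans (le_of_eq ?_)
          rw [← ENNReal.ofReal_mul (by positivity), ← ENNReal.ofReal_mul (by positivity)]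
          congr 1
          have : R ^ (-(n / s - β) - 1) = R ^ (-(n - β) - 1) * R ^ (n - n / s) := by
            rw [← Real.rpow_add hR0]; congr 1; ring
          rw [this]
          have e := one_div_mul_cancel hns.ne'
          linear_combination (-((n-β)*c*(R^(-(n-β)-1)*R^(n-n/s)))) * e
      _ = _ := by
          rw [lintegral_const_mul' _ _ ENNReal.ofReal_ne_top,
            setLIntegral_Ioi_rpow hns hδ0, ← ENNReal.ofReal_mul (by positivity)]
          congr 2
          rw [hδ, ← Real.rpow_mul hm.le]
          congr 1
          field_simp
  rw [← Ioc_union_Ioi_eq_Ioi hδ0.le, lintegral_union measurableSet_Ioi Ioc_disjoint_Ioi_same]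
  refine (add_le_add hnear hfar).trans (le_of_eq ?_)
  rw [← ENNReal.ofReal_add (by positivity) (by positivity), ENNReal.ofReal_rpow_of_pos hm,
    ← ENNReal.ofReal_mul hC0.le, hC]
  congr 1
  ring

theorem integrable_exp_neg_mul_norm_rpow {n : ℕ} (hn : n ≠ 0) {p b : ℝ} (hp : 0 < p)
    (hb : 0 < b) : Integrable (fun ξ : Rn n => Real.exp (-b * ‖ξ‖ ^ p)) := by
  have : NeZero n := ⟨hn⟩
  rw [integrable_fun_norm_addHaar volume (f := fun r => Real.exp (-b * r ^ p))]
  have := integrableOn_rpow_mul_exp_neg_mul_rpow (s := (n - 1 : ℕ)) (p := p) (b := b)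
    (lt_of_lt_of_le (by norm_num) (Nat.cast_nonneg _)) hp hb
  refine this.congr_fun (fun r hr => ?_) measurableSet_Ioi
  simp [Real.rpow_natCast]

theorem integrable_exp_neg_mul_norm_sq {n : ℕ} (hn : n ≠ 0) {b : ℝ} (hb : 0 < b) :
    Integrable (fun ξ : Rn n => Real.exp (-b * ‖ξ‖ ^ 2)) := by
  simpa using integrable_exp_neg_mul_norm_rpow (n := n) hn (p := 2) two_pos hb

/-- The inverse Fourier integral of the multiplier `m`, damped by a Gaussian. -/
def dampedKernel (n : ℕ) (m : Rn n → ℝ) (δ : ℝ) (x : Rn n) : ℂ :=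
  ∫ ξ : Rn n, Real.fourierChar (inner ℝ ξ x) • ((m ξ * Real.exp (-δ * ‖ξ‖ ^ 2) : ℝ) : ℂ)

/-- Multipliers bounded by one all of whose damped kernels are bounded by `K` at `x`. -/
structure DampedBound (n : ℕ) (K : ℝ) (x : Rn n) (m : Rn n → ℝ) : Prop where
  meas : Measurable m
  bdd : ∀ ξ, |m ξ| ≤ 1
  bound : ∀ δ > 0, ‖dampedKernel n m δ x‖ ≤ K

/-- Multipliers preserving `DampedBound` under multiplication. -/
def DampedMul (n : ℕ) (K : ℝ) (x : Rn n) (φ : Rn n → ℝ) : Prop :=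
  ∀ m, DampedBound n K x m → DampedBound n K x (fun ξ => φ ξ * m ξ)

theorem norm_fourierChar_smul {n : ℕ} (ξ x : Rn n) (r : ℝ) :
    ‖Real.fourierChar (inner ℝ ξ x) • (r : ℂ)‖ = |r| := by
  rw [Circle.norm_smul, Complex.norm_real, Real.norm_eq_abs]

theorem norm_damped_le {n : ℕ} {m : Rn n → ℝ} (hm : ∀ ξ, |m ξ| ≤ 1) (δ : ℝ) (ξ x : Rn n) :
    ‖Real.fourierChar (inner ℝ ξ x) • ((m ξ * Real.exp (-δ * ‖ξ‖ ^ 2) : ℝ) : ℂ)‖ ≤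
      Real.exp (-δ * ‖ξ‖ ^ 2) := by
  rw [norm_fourierChar_smul, abs_mul, abs_of_pos (Real.exp_pos _)]
  exact mul_le_of_le_one_left (Real.exp_pos _).le (hm ξ)

theorem measurable_damped {n : ℕ} {m : Rn n → ℝ} (hm : Measurable m) (δ : ℝ) (x : Rn n) :
    Measurable fun ξ : Rn n =>
      Real.fourierChar (inner ℝ ξ x) • ((m ξ * Real.exp (-δ * ‖ξ‖ ^ 2) : ℝ) : ℂ) := by
  simp only [Circle.smul_def]
  have : Continuous fun ξ : Rn n => ((Real.fourierChar (inner ℝ ξ x) : Circle) : ℂ) :=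
    continuous_subtype_val.comp (Real.continuous_fourierChar.comp (by fun_prop))
  exact this.measurable.smul (by fun_prop)

theorem integrable_damped {n : ℕ} (hn : n ≠ 0) {m : Rn n → ℝ} (hm : Measurable m)
    (hb : ∀ ξ, |m ξ| ≤ 1) {δ : ℝ} (hδ : 0 < δ) (x : Rn n) :
    Integrable fun ξ : Rn n =>
      Real.fourierChar (inner ℝ ξ x) • ((m ξ * Real.exp (-δ * ‖ξ‖ ^ 2) : ℝ) : ℂ) :=
  (integrable_exp_neg_mul_norm_sq hn hδ).mono' (measurable_damped hm δ x).aestronglyMeasurable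
    (ae_of_all _ fun ξ => norm_damped_le hb δ ξ x)

theorem DampedBound.of_tendsto {n : ℕ} (hn : n ≠ 0) {K : ℝ} {x : Rn n} {m : ℕ → Rn n → ℝ}
    (hm : ∀ k, DampedBound n K x (m k)) {f : Rn n → ℝ}
    (hf : ∀ ξ, Filter.Tendsto (fun k => m k ξ) Filter.atTop (nhds (f ξ))) :
    DampedBound n K x f := by
  refine ⟨measurable_of_tendsto_metrizable (fun k => (hm k).meas) (tendsto_pi_nhds.2 hf),
    fun ξ => le_of_tendsto' (hf ξ).abs fun k => (hm k).bdd ξ, fun δ hδ => ?_⟩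
  have : Filter.Tendsto (fun k => dampedKernel n (m k) δ x) Filter.atTop
      (nhds (dampedKernel n f δ x)) := by
    refine tendsto_integral_of_dominated_convergence (fun ξ => Real.exp (-δ * ‖ξ‖ ^ 2))
      (fun k => (measurable_damped (hm k).meas δ x).aestronglyMeasurable)
      (integrable_exp_neg_mul_norm_sq hn hδ)
      (fun k => ae_of_all _ fun ξ => norm_damped_le (hm k).bdd δ ξ x)
      (ae_of_all _ fun ξ => ?_)
    simp only [Circle.smul_def]
    exact ((Complex.continuous_ofReal.tendsto _).comp ((hf ξ).mul_const _)).const_smul _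
  exact le_of_tendsto' this.norm fun k => (hm k).bound δ hδ

theorem DampedMul.of_tendsto {n : ℕ} (hn : n ≠ 0) {K : ℝ} {x : Rn n} {φ : ℕ → Rn n → ℝ}
    (hφ : ∀ k, DampedMul n K x (φ k)) {f : Rn n → ℝ}
    (hf : ∀ ξ, Filter.Tendsto (fun k => φ k ξ) Filter.atTop (nhds (f ξ))) :
    DampedMul n K x f :=
  fun m hm => .of_tendsto hn (fun k => hφ k m hm) fun ξ => (hf ξ).mul_const _

theorem DampedMul.pow {n : ℕ} {K : ℝ} {x : Rn n} {φ : Rn n → ℝ} (hφ : DampedMul n K x φ)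
    (k : ℕ) : DampedMul n K x (fun ξ => φ ξ ^ k) := by
  induction k with
  | zero => intro m hm; simpa using hm
  | succ k ih =>
    intro m hm
    have := ih _ (hφ m hm)
    simpa only [pow_succ, mul_assoc] using this

theorem DampedMul.exp_neg {n : ℕ} {K : ℝ} {x : Rn n} {l : ℝ} (hl : 0 ≤ l) :
    DampedMul n K x (fun ξ => Real.exp (-l * ‖ξ‖ ^ 2)) := by
  intro m hm
  refine ⟨Measurable.mul (by fun_prop) hm.meas, fun ξ => ?_, fun δ hδ => ?_⟩
  · rw [abs_mul, abs_of_pos (Real.exp_pos _)]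
    refine mul_le_one₀ (Real.exp_le_one_iff.2 ?_) (abs_nonneg _) (hm.bdd ξ)
    have := mul_nonneg hl (sq_nonneg ‖ξ‖)
    linarith
  · convert hm.bound (δ + l) (by positivity) using 2
    unfold dampedKernel
    congr 1
    ext ξ
    rw [show -(δ + l) * ‖ξ‖ ^ 2 = -l * ‖ξ‖ ^ 2 + -δ * ‖ξ‖ ^ 2 by ring, Real.exp_add]
    congr 2
    ring

theorem DampedMul.average {n : ℕ} (hn : n ≠ 0) {K : ℝ} {x : Rn n} {Ω : Type*}
    [MeasurableSpace Ω] (ν : Measure Ω) [IsProbabilityMeasure ν] {φ : Ω → Rn n → ℝ}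
    (hmeas : Measurable (Function.uncurry φ)) (hφ : ∀ ω, DampedMul n K x (φ ω)) :
    DampedMul n K x (fun ξ => ∫ ω, φ ω ξ ∂ν) := by
  intro m hm
  have hF : ∀ ξ, (∫ ω, φ ω ξ ∂ν) * m ξ = ∫ ω, φ ω ξ * m ξ ∂ν := fun ξ =>
    (integral_mul_const _ _).symm
  simp only [hF]
  have hmeas' : Measurable (Function.uncurry fun ω ξ => φ ω ξ * m ξ) :=
    hmeas.mul (hm.meas.comp measurable_snd)
  have hswap : Measurable fun q : Rn n × Ω => φ q.2 q.1 * m q.1 := hmeas'.comp measurable_swap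
  refine ⟨hswap.stronglyMeasurable.integral_prod_right'.measurable, fun ξ => ?_, fun δ hδ => ?_⟩
  · have := norm_integral_le_of_norm_le_const (μ := ν) (f := fun ω => φ ω ξ * m ξ) (C := 1)
      (ae_of_all _ fun ω => by simpa using (hφ ω m hm).bdd ξ)
    simpa using this
  · have hint : Integrable (Function.uncurry fun (ξ : Rn n) ω => Real.fourierChar (inner ℝ ξ x) •
        ((φ ω ξ * m ξ * Real.exp (-δ * ‖ξ‖ ^ 2) : ℝ) : ℂ)) (volume.prod ν) := by
      refine ((integrable_exp_neg_mul_norm_sq hn hδ).comp_fst ν).mono' ?_ (ae_of_all _ fun q => ?_)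
      · simp only [Circle.smul_def, Function.uncurry_def]
        have : Continuous fun ξ : Rn n => ((Real.fourierChar (inner ℝ ξ x) : Circle) : ℂ) :=
          continuous_subtype_val.comp (Real.continuous_fourierChar.comp (by fun_prop))
        exact ((this.measurable.comp measurable_fst).smul
          (Complex.measurable_ofReal.comp (hswap.mul (by fun_prop)))).aestronglyMeasurable
      · exact norm_damped_le (hφ q.2 m hm).bdd δ q.1 x
    have : dampedKernel n (fun ξ => ∫ ω, φ ω ξ * m ξ ∂ν) δ x =
        ∫ ω, dampedKernel n (fun ξ => φ ω ξ * m ξ) δ x ∂ν := by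
      unfold dampedKernel
      rw [← integral_integral_swap hint]
      congr 1
      ext ξ
      simp only [Circle.smul_def]
      rw [integral_smul, ← integral_mul_const, ← integral_complex_ofReal]
    rw [this]
    simpa using norm_integral_le_of_norm_le_const (μ := ν)
      (ae_of_all _ fun ω => (hφ ω m hm).bound δ hδ)

theorem DampedMul.convex {n : ℕ} (hn : n ≠ 0) {K : ℝ} {x : Rn n} {φ : Rn n → ℝ}
    (hφ : DampedMul n K x φ) {c : ℝ} (hc0 : 0 ≤ c) (hc1 : c ≤ 1) :
    DampedMul n K x (fun ξ => 1 - c * (1 - φ ξ)) := by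
  intro m hm
  have h := hφ m hm
  have e : ∀ ξ, (1 - c * (1 - φ ξ)) * m ξ = (1 - c) * m ξ + c * (φ ξ * m ξ) := fun ξ => by ring
  simp only [e]
  have hc1' := sub_nonneg.2 hc1
  refine ⟨(hm.meas.const_mul _).add (h.meas.const_mul _), fun ξ => ?_, fun δ hδ => ?_⟩
  · refine (abs_add_le _ _).trans ?_
    rw [abs_mul, abs_mul, abs_of_nonneg hc0, abs_of_nonneg hc1']
    nlinarith [hm.bdd ξ, h.bdd ξ]
  · have : dampedKernel n (fun ξ => (1 - c) * m ξ + c * (φ ξ * m ξ)) δ x =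
        ((1 - c : ℝ) : ℂ) * dampedKernel n m δ x +
          (c : ℂ) * dampedKernel n (fun ξ => φ ξ * m ξ) δ x := by
      unfold dampedKernel
      rw [← integral_const_mul, ← integral_const_mul, ← integral_add
        ((integrable_damped hn hm.meas hm.bdd hδ x).const_mul _)
        ((integrable_damped hn h.meas h.bdd hδ x).const_mul _)]
      congr 1
      ext ξ
      simp only [Circle.smul_def, smul_eq_mul]
      push_cast
      ring
    rw [this]
    refine (norm_add_le _ _).trans ?_
    rw [norm_mul, norm_mul, Complex.norm_real, Complex.norm_real, Real.norm_of_nonneg hc0,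
      Real.norm_of_nonneg hc1']
    nlinarith [hm.bound δ hδ, h.bound δ hδ]

/-- Closure under compound Poisson exponentials. -/
theorem DampedMul.exp_integral {n : ℕ} (hn : n ≠ 0) {K : ℝ} {x : Rn n}
    (ν : Measure ℝ) [IsProbabilityMeasure ν] (hν : ∀ᵐ l ∂ν, 0 ≤ l) {a : ℝ} (ha : 0 ≤ a) :
    DampedMul n K x
      (fun ξ => Real.exp (-(a * ∫ l, (1 - Real.exp (-l * ‖ξ‖ ^ 2)) ∂ν))) := by
  set I : Rn n → ℝ := fun ξ => ∫ l, (1 - Real.exp (-l * ‖ξ‖ ^ 2)) ∂ν with hI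
  have hstep : ∀ c : ℝ, 0 ≤ c → c ≤ 1 → DampedMul n K x (fun ξ => 1 - c * I ξ) := by
    intro c hc0 hc1
    have h := DampedMul.average hn (K := K) (x := x) ν
      (φ := fun l ξ => 1 - c * (1 - Real.exp (-|l| * ‖ξ‖ ^ 2)))
      (by unfold Function.uncurry; fun_prop)
      (fun l => (DampedMul.exp_neg (abs_nonneg l)).convex hn hc0 hc1)
    convert h using 2 with ξ
    have hint : Integrable (fun l => 1 - Real.exp (-|l| * ‖ξ‖ ^ 2)) ν := by
      refine Integrable.of_bound (by fun_prop) 1 (ae_of_all _ fun l => ?_)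
      have h0 := mul_nonneg (abs_nonneg l) (sq_nonneg ‖ξ‖)
      have h1 : Real.exp (-|l| * ‖ξ‖ ^ 2) ≤ 1 := Real.exp_le_one_iff.2 (by linarith)
      rw [Real.norm_of_nonneg (by linarith)]
      linarith [Real.exp_pos (-|l| * ‖ξ‖ ^ 2)]
    rw [integral_sub (integrable_const _) (hint.const_mul c), integral_const_mul,
      integral_const, probReal_univ, one_smul, hI]
    congr 2
    refine integral_congr_ae ?_
    filter_upwards [hν] with l hl
    rw [abs_of_nonneg hl]
  have hlim : ∀ ξ, Filter.Tendsto (fun j : ℕ => (1 - a / (j + (⌈a⌉₊ + 1) : ℕ) * I ξ) ^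
      (j + (⌈a⌉₊ + 1))) Filter.atTop (nhds (Real.exp (-(a * I ξ)))) := by
    intro ξ
    have h := (Real.tendsto_one_add_div_pow_exp (-(a * I ξ))).comp
      (Filter.tendsto_add_atTop_nat (⌈a⌉₊ + 1))
    refine h.congr fun j => ?_
    simp only [Function.comp]
    congr 1
    ring
  refine DampedMul.of_tendsto hn (fun j => (hstep (a / (j + (⌈a⌉₊ + 1) : ℕ)) (by positivity)
    ?_).pow (j + (⌈a⌉₊ + 1))) hlim
  rw [div_le_one (by positivity)]
  push_cast
  linarith [Nat.le_ceil a, Nat.cast_nonneg (α := ℝ) j]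

theorem dampedBound_one {n : ℕ} (hn : n ≠ 0) {x : Rn n} (hx : x ≠ 0) :
    DampedBound n ((n / (2 * Real.pi)) ^ (n / 2 : ℝ) * ‖x‖ ^ (-(n : ℝ))) x (fun _ => 1) := by
  refine ⟨measurable_const, fun _ => by simp, fun δ hδ => ?_⟩
  have hx0 : 0 < ‖x‖ := norm_pos_iff.2 hx
  have hn0 : (0:ℝ) < n := by positivity
  have e : dampedKernel n (fun _ => 1) δ x =
      (Real.pi / δ : ℂ) ^ (n / 2 : ℂ) * Complex.exp (-Real.pi ^ 2 * ‖x‖ ^ 2 / δ) := by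
    have h := fourier_gaussian_innerProductSpace (V := Rn n) (b := δ) (by simpa using hδ) (-x)
    rw [norm_neg, finrank_euclideanSpace_fin] at h
    rw [← h, Real.fourier_eq]
    unfold dampedKernel
    congr 1
    ext ξ
    simp
  have e2 : ‖dampedKernel n (fun _ => 1) δ x‖ =
      (Real.pi / δ) ^ (n / 2 : ℝ) * Real.exp (-(Real.pi ^ 2 * ‖x‖ ^ 2 / δ)) := by
    rw [e, norm_mul, Complex.norm_exp, ← Complex.ofReal_div,
      Complex.norm_cpow_eq_rpow_re_of_pos (by positivity)]
    congr 2
    · simp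
    · rw [neg_mul, neg_div, Complex.neg_re, ← Complex.ofReal_pow, ← Complex.ofReal_pow,
        ← Complex.ofReal_mul, ← Complex.ofReal_div, Complex.ofReal_re]
  rw [e2]
  set r := Real.pi ^ 2 * ‖x‖ ^ 2 / δ with hr
  have hr0 : 0 < r := by positivity
  have h1 : r / (n / 2) ≤ Real.exp (r / (n / 2)) := by
    linarith [Real.add_one_le_exp (r / (n / 2))]
  have h2 := Real.rpow_le_rpow (by positivity) h1 (show (0:ℝ) ≤ n / 2 by positivity)
  rw [← Real.exp_mul, div_mul_cancel₀ _ (by positivity)] at h2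
  have h3 : (Real.pi / δ) ^ (n / 2 : ℝ) =
      (n / (2 * Real.pi)) ^ (n / 2 : ℝ) * ‖x‖ ^ (-(n : ℝ)) * (r / (n / 2)) ^ (n / 2 : ℝ) := by
    have : ‖x‖ ^ (-(n : ℝ)) = ((‖x‖ ^ 2)⁻¹) ^ (n / 2 : ℝ) := by
      rw [← Real.rpow_natCast, ← Real.rpow_neg hx0.le, ← Real.rpow_mul hx0.le]
      congr 1
      push_cast
      ring
    rw [this, ← Real.mul_rpow (by positivity) (by positivity),
      ← Real.mul_rpow (by positivity) (by positivity), hr]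
    congr 1
    field_simp
  rw [h3, Real.exp_neg]
  calc _ ≤ (n / (2 * Real.pi)) ^ (n / 2 : ℝ) * ‖x‖ ^ (-(n : ℝ)) * Real.exp r * (Real.exp r)⁻¹ := by
        gcongr
    _ = _ := by rw [mul_assoc, mul_inv_cancel₀ (Real.exp_pos _).ne', mul_one]

theorem integrableOn_one_sub_exp_mul_rpow {α s : ℝ} (hα0 : 0 < α) (hα1 : α < 1) (hs : 0 ≤ s) :
    IntegrableOn (fun l : ℝ => (1 - Real.exp (-l * s)) * l ^ (-α - 1)) (Ioi 0) := by
  have hmeas : Measurable fun l : ℝ => (1 - Real.exp (-l * s)) * l ^ (-α - 1) := by fun_prop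
  rw [← Ioc_union_Ioi_eq_Ioi zero_le_one]
  refine IntegrableOn.union ?_ ?_
  · have h : IntegrableOn (fun l : ℝ => s * l ^ (-α)) (Ioc 0 1) :=
      ((intervalIntegrable_iff_integrableOn_Ioc_of_le zero_le_one).1
        (intervalIntegral.intervalIntegrable_rpow' (by linarith))).const_mul s
    refine h.mono' hmeas.aestronglyMeasurable
      ((ae_restrict_iff' measurableSet_Ioc).2 (ae_of_all _ fun l hl => ?_))
    have hl0 : 0 < l := hl.1
    have h1 : Real.exp (-l * s) ≤ 1 := Real.exp_le_one_iff.2 (by nlinarith)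
    have h2 := Real.add_one_le_exp (-l * s)
    rw [Real.norm_of_nonneg (mul_nonneg (by linarith) (by positivity))]
    calc _ ≤ (l * s) * l ^ (-α - 1) := by gcongr; linarith
      _ = s * l ^ (-α) := by
        rw [show -α = (-α - 1) + 1 by ring, Real.rpow_add_one hl0.ne', add_sub_cancel_right]
        ring
  · have h : IntegrableOn (fun l : ℝ => l ^ (-α - 1)) (Ioi 1) :=
      integrableOn_Ioi_rpow_of_lt (by linarith) one_pos
    refine h.mono' hmeas.aestronglyMeasurable
      ((ae_restrict_iff' measurableSet_Ioi).2 (ae_of_all _ fun l hl => ?_))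
    have hl0 : 0 < l := one_pos.trans hl
    have h1 : Real.exp (-l * s) ≤ 1 := Real.exp_le_one_iff.2 (by nlinarith)
    rw [Real.norm_of_nonneg (mul_nonneg (by linarith) (by positivity))]
    refine mul_le_of_le_one_left (by positivity) ?_
    linarith [Real.exp_pos (-l * s)]

theorem integral_one_sub_exp_mul_rpow {α s : ℝ} (hα0 : 0 < α) (hs : 0 ≤ s) :
    ∫ l in Ioi (0:ℝ), (1 - Real.exp (-l * s)) * l ^ (-α - 1) =
      s ^ α * ∫ l in Ioi (0:ℝ), (1 - Real.exp (-l)) * l ^ (-α - 1) := by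
  rcases hs.eq_or_lt with rfl | hs
  · simp [Real.zero_rpow hα0.ne']
  have h := integral_comp_mul_left_Ioi (fun l : ℝ => (1 - Real.exp (-l)) * l ^ (-α - 1)) 0 hs
  rw [mul_zero, smul_eq_mul] at h
  have e : ∫ l in Ioi (0:ℝ), (1 - Real.exp (-(s * l))) * (s * l) ^ (-α - 1) =
      s ^ (-α - 1) * ∫ l in Ioi (0:ℝ), (1 - Real.exp (-l * s)) * l ^ (-α - 1) := by
    rw [← integral_const_mul]
    refine setIntegral_congr_fun measurableSet_Ioi fun l hl => ?_
    have hl0 : 0 < l := hl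
    rw [Real.mul_rpow hs.le hl0.le, show -(s * l) = -l * s by ring]
    ring
  have e' : s ^ (-α - 1) * s ^ α = s⁻¹ := by
    rw [← Real.rpow_add hs, show -α - 1 + α = -1 by ring, Real.rpow_neg_one]
  rw [e, ← e'] at h
  have hp : s ^ (-α - 1) ≠ 0 := (Real.rpow_pos_of_pos hs _).ne'
  rw [mul_assoc] at h
  exact mul_left_cancel₀ hp h

theorem integral_one_sub_exp_pos {α : ℝ} (hα0 : 0 < α) (hα1 : α < 1) :
    0 < ∫ l in Ioi (0:ℝ), (1 - Real.exp (-l)) * l ^ (-α - 1) := by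
  have hpos : ∀ l ∈ Ioi (0:ℝ), 0 < (1 - Real.exp (-l)) * l ^ (-α - 1) := fun l hl => by
    have hl0 : 0 < l := hl
    have h1 : Real.exp (-l) < 1 := Real.exp_lt_one_iff.2 (by linarith)
    exact mul_pos (by linarith) (by positivity)
  have hint := integrableOn_one_sub_exp_mul_rpow hα0 hα1 zero_le_one
  simp only [mul_one] at hint
  rw [setIntegral_pos_iff_support_of_nonneg_ae
    ((ae_restrict_iff' measurableSet_Ioi).2 (ae_of_all _ fun l hl => (hpos l hl).le)) hint,
    inter_eq_self_of_subset_right (fun l hl => Function.mem_support.2 (hpos l hl).ne')]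
  simp

theorem DampedMul.exp_neg_rpow {n : ℕ} (hn : n ≠ 0) {K : ℝ} {x : Rn n} {α t : ℝ} (hα0 : 0 < α)
    (hα1 : α ≤ 1) (ht : 0 ≤ t) :
    DampedMul n K x (fun ξ => Real.exp (-t * ‖ξ‖ ^ (2 * α))) := by
  rcases hα1.eq_or_lt with rfl | hα1
  · simpa using DampedMul.exp_neg (n := n) (K := K) (x := x) ht
  set c : ℝ := ∫ l in Ioi (0:ℝ), (1 - Real.exp (-l)) * l ^ (-α - 1) with hc
  have hc0 : 0 < c := integral_one_sub_exp_pos hα0 hα1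
  have hdens : ∀ ε : ℝ, 0 < ε → DampedMul n K x (fun ξ => Real.exp (-(t / c *
      ∫ l in Ioi ε, (1 - Real.exp (-l * ‖ξ‖ ^ 2)) * l ^ (-α - 1)))) := by
    intro ε hε
    set w : ℝ → ℝ≥0∞ := fun l => ENNReal.ofReal (ε ^ α) * ENNReal.ofReal (α * l ^ (-α - 1)) with hw
    have hwm : Measurable w := by fun_prop
    set ν := (volume.restrict (Ioi ε)).withDensity w with hν
    have hprob : IsProbabilityMeasure ν := by
      refine ⟨?_⟩
      rw [hν, withDensity_apply _ MeasurableSet.univ, setLIntegral_univ,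
        lintegral_const_mul' _ _ ENNReal.ofReal_ne_top, setLIntegral_Ioi_rpow hα0 hε,
        ← ENNReal.ofReal_mul (by positivity), ← Real.rpow_add hε, add_neg_cancel, Real.rpow_zero,
        ENNReal.ofReal_one]
    have hpos : ∀ᵐ l ∂(volume.restrict (Ioi ε)), 0 ≤ l := by
      filter_upwards [ae_restrict_mem measurableSet_Ioi] with l hl
      exact hε.le.trans (le_of_lt hl)
    have hνpos : ∀ᵐ l ∂ν, 0 ≤ l := 
      (withDensity_absolutelyContinuous (volume.restrict (Ioi ε)) w).ae_le hpos
    have h := DampedMul.exp_integral hn (K := K) (x := x) ν hνpos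
      (a := t / c * (ε ^ (-α) / α)) (by positivity)
    convert h using 4 with ξ
    rw [hν, integral_withDensity_eq_integral_toReal_smul hwm
      (ae_of_all _ fun l => ENNReal.mul_lt_top ENNReal.ofReal_lt_top ENNReal.ofReal_lt_top),
      mul_assoc]
    congr 1
    rw [← integral_const_mul]
    refine setIntegral_congr_fun measurableSet_Ioi fun l hl => ?_
    have hl0 : 0 < l := hε.trans hl
    simp only [hw, smul_eq_mul]
    rw [← ENNReal.ofReal_mul (by positivity), ENNReal.toReal_ofReal (by positivity),
      Real.rpow_neg hε.le]
    have := (Real.rpow_pos_of_pos hε α).ne'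
    field_simp
  refine DampedMul.of_tendsto hn (fun k : ℕ => hdens (1 / (k + 1)) (by positivity)) fun ξ => ?_
  have hU : ⋃ k : ℕ, Ioi (1 / ((k:ℝ) + 1)) = Ioi 0 := by
    ext l
    simp only [mem_iUnion, mem_Ioi]
    exact ⟨fun ⟨k, hk⟩ => lt_trans (by positivity) hk, fun hl => exists_nat_one_div_lt hl⟩
  have hlim := tendsto_setIntegral_of_monotone (μ := volume)
    (s := fun k : ℕ => Ioi (1 / ((k:ℝ) + 1)))
    (f := fun l => (1 - Real.exp (-l * ‖ξ‖ ^ 2)) * l ^ (-α - 1)) (fun _ => measurableSet_Ioi)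
    (fun i j hij => Ioi_subset_Ioi (Nat.one_div_le_one_div hij))
    (by rw [hU]; exact integrableOn_one_sub_exp_mul_rpow hα0 hα1 (sq_nonneg _))
  rw [hU, integral_one_sub_exp_mul_rpow hα0 (sq_nonneg _)] at hlim
  have hfin : -t * ‖ξ‖ ^ (2 * α) = -(t / c * ((‖ξ‖ ^ 2) ^ α * c)) := by
    rw [Real.rpow_mul (norm_nonneg _), Real.rpow_two]
    field_simp
  rw [hfin]
  exact (Real.continuous_exp.tendsto _).comp ((hlim.const_mul _).neg)

/-- Spatial decay of the fractional heat kernel, uniform in time. -/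
theorem abs_gKer_le_norm {n : ℕ} (hn : n ≠ 0) {α t : ℝ} (hα0 : 0 < α) (hα1 : α ≤ 1) (ht : 0 < t)
    {x : Rn n} (hx : x ≠ 0) :
    |gKer n α t x| ≤ (n / (2 * Real.pi)) ^ (n / 2 : ℝ) * ‖x‖ ^ (-(n : ℝ)) := by
  set K := (n / (2 * Real.pi)) ^ (n / 2 : ℝ) * ‖x‖ ^ (-(n : ℝ))
  have h := DampedMul.exp_neg_rpow hn (K := K) hα0 hα1 ht.le _ (dampedBound_one hn hx)
  simp only [mul_one] at h
  have hlim : Filter.Tendsto (fun k : ℕ => dampedKernel n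
      (fun ξ => Real.exp (-t * ‖ξ‖ ^ (2 * α))) (1 / ((k:ℝ) + 1)) x) Filter.atTop
      (nhds (𝓕⁻ (fun ξ : Rn n => (Real.exp (-t * ‖ξ‖ ^ (2 * α)) : ℂ)) x)) := by
    rw [Real.fourierInv_eq]
    refine tendsto_integral_of_dominated_convergence
      (fun ξ => Real.exp (-t * ‖ξ‖ ^ (2 * α)))
      (fun k => (measurable_damped h.meas _ x).aestronglyMeasurable)
      (integrable_exp_neg_mul_norm_rpow hn (by positivity) ht)
      (fun k => ae_of_all _ fun ξ => ?_) (ae_of_all _ fun ξ => ?_)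
    · rw [norm_fourierChar_smul, abs_mul, abs_of_pos (Real.exp_pos _),
        abs_of_pos (Real.exp_pos _)]
      refine mul_le_of_le_one_right (Real.exp_pos _).le (Real.exp_le_one_iff.2 ?_)
      have : 0 ≤ 1 / ((k:ℝ) + 1) * ‖ξ‖ ^ 2 := by positivity
      linarith
    · simp only [Circle.smul_def]
      refine Filter.Tendsto.const_smul ?_ _
      refine (Complex.continuous_ofReal.tendsto _).comp ?_
      have h0 : Filter.Tendsto (fun k : ℕ => Real.exp (-(1 / ((k:ℝ) + 1)) * ‖ξ‖ ^ 2))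
          Filter.atTop (nhds (Real.exp (-0 * ‖ξ‖ ^ 2))) :=
        (Real.continuous_exp.tendsto _).comp
          ((tendsto_one_div_add_atTop_nhds_zero_nat.neg).mul_const _)
      simpa using h0.const_mul (Real.exp (-t * ‖ξ‖ ^ (2 * α)))
  exact (Complex.abs_re_le_norm _).trans
    (le_of_tendsto' hlim.norm fun k => h.bound _ (by positivity))

/-- Temporal decay of the fractional heat kernel, uniform in space. -/
theorem abs_gKer_le_time {n : ℕ} {α t : ℝ} (hα0 : 0 < α) (ht : 0 < t) (x : Rn n) :
    |gKer n α t x| ≤ (∫ ξ : Rn n, Real.exp (-‖ξ‖ ^ (2 * α))) * t ^ (-(n / (2 * α))) := by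
  refine (Complex.abs_re_le_norm _).trans ?_
  rw [Real.fourierInv_eq]
  refine (norm_integral_le_integral_norm _).trans (le_of_eq ?_)
  have h1 : ∀ ξ : Rn n, ‖Real.fourierChar (inner ℝ ξ x) •
      ((Real.exp (-t * ‖ξ‖ ^ (2 * α)) : ℝ) : ℂ)‖ =
      Real.exp (-‖t ^ (1 / (2 * α)) • ξ‖ ^ (2 * α)) := by
    intro ξ
    rw [norm_fourierChar_smul, abs_of_pos (Real.exp_pos _), norm_smul,
      Real.norm_of_nonneg (by positivity), Real.mul_rpow (by positivity) (norm_nonneg _),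
      ← Real.rpow_mul ht.le, one_div_mul_cancel (by positivity), Real.rpow_one, neg_mul]
  have h2 := Measure.integral_comp_smul_of_nonneg (volume : Measure (Rn n))
    (fun ξ => Real.exp (-‖ξ‖ ^ (2 * α))) (t ^ (1 / (2 * α))) (hR := by positivity)
  simp_rw [← h1, finrank_euclideanSpace_fin, smul_eq_mul] at h2
  rw [h2, mul_comm]
  congr 1
  rw [← Real.rpow_natCast, ← Real.rpow_mul ht.le, ← Real.rpow_neg ht.le]
  congr 1
  ring

/-- A jointly measurable majorant of the fractional heat kernel whose time integral is a Riesz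
kernel. -/
theorem exists_gKer_majorant {n : ℕ} (hn : n ≠ 0) {α : ℝ} (hα0 : 0 < α) (hα1 : α ≤ 1)
    (h2α : 2 * α < n) :
    ∃ k : ℝ → Rn n → ℝ≥0∞, Measurable (Function.uncurry k) ∧
      (∀ t > 0, ∀ x ≠ 0, ‖gKer n α t x‖ₑ ≤ k t x) ∧
      ∃ C > (0:ℝ), ∀ x ≠ 0, ∫⁻ t in Ioi 0, k t x ≤ ENNReal.ofReal (C * ‖x‖ ^ (2 * α - n)) := by
  set A : ℝ := ∫ ξ : Rn n, Real.exp (-‖ξ‖ ^ (2 * α)) with hA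
  have hA0 : 0 ≤ A := integral_nonneg fun ξ => (Real.exp_pos _).le
  set B : ℝ := (n / (2 * Real.pi)) ^ (n / 2 : ℝ) with hB
  have hn0 : (0:ℝ) < n := by positivity
  have hB0 : 0 < B := by positivity
  set γ : ℝ := n / (2 * α) - 1 with hγ
  have hγ0 : 0 < γ := by rw [hγ, sub_pos, one_lt_div (by positivity)]; exact h2α
  refine ⟨fun t x => min (ENNReal.ofReal (A * t ^ (-(n / (2 * α)))))
    (ENNReal.ofReal (B * ‖x‖ ^ (-(n:ℝ)))), by unfold Function.uncurry; fun_prop,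
    fun t ht x hx => ?_, B + A / γ, by positivity, fun x hx => ?_⟩
  · rw [Real.enorm_eq_ofReal_abs]
    exact le_min (ENNReal.ofReal_le_ofReal (abs_gKer_le_time hα0 ht x))
      (ENNReal.ofReal_le_ofReal (abs_gKer_le_norm hn hα0 hα1 ht hx))
  · have hx0 : 0 < ‖x‖ := norm_pos_iff.2 hx
    set δ := ‖x‖ ^ (2 * α) with hδ
    have hδ0 : 0 < δ := by positivity
    rw [← Ioc_union_Ioi_eq_Ioi hδ0.le, lintegral_union measurableSet_Ioi Ioc_disjoint_Ioi_same,
      add_mul, ENNReal.ofReal_add (by positivity) (by positivity)]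
    refine add_le_add ?_ ?_
    · calc _ ≤ ∫⁻ _ in Ioc 0 δ, ENNReal.ofReal (B * ‖x‖ ^ (-(n:ℝ))) :=
            lintegral_mono fun _ => min_le_right _ _
        _ = _ := by
          rw [setLIntegral_const, Real.volume_Ioc, sub_zero, ← ENNReal.ofReal_mul (by positivity),
            mul_assoc, hδ, ← Real.rpow_add hx0]
          congr 3
          ring
    · calc _ ≤ ∫⁻ t in Ioi δ, ENNReal.ofReal (A / γ) * ENNReal.ofReal (γ * t ^ (-γ - 1)) := by
            refine setLIntegral_mono' measurableSet_Ioi fun t ht => (min_le_left _ _).trans ?_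
            rw [← ENNReal.ofReal_mul (by positivity)]
            refine le_of_eq (congrArg _ ?_)
            rw [show -(n / (2 * α)) = -γ - 1 by rw [hγ]; ring]
            field_simp
        _ = _ := by
          rw [lintegral_const_mul' _ _ ENNReal.ofReal_ne_top, setLIntegral_Ioi_rpow hγ0 hδ0,
            ← ENNReal.ofReal_mul (by positivity), hδ, ← Real.rpow_mul hx0.le]
          congr 3
          rw [hγ]
          field_simp
          ring

theorem timeSup_le_iff {n : ℕ} {u : ℝ → Rn n → ℝ} {x : Rn n} {a : ℝ≥0∞} :
    timeSup n u x ≤ a ↔ ∀ᵐ t ∂(volume.restrict (Ioi (0:ℝ))), ENNReal.ofReal |u t x| ≤ a :=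
  ⟨fun h => (ENNReal.ae_le_essSup _).mono fun _ ht => ht.trans h, fun h => essSup_le_of_ae_le _ h⟩

theorem measurable_timeSup {n : ℕ} {u : ℝ → Rn n → ℝ} (hu : Measurable (Function.uncurry u)) :
    Measurable (timeSup n u) := by
  refine measurable_of_Iic fun a => ?_
  have hs : MeasurableSet {q : ℝ × Rn n | ¬ ENNReal.ofReal |u q.1 q.2| ≤ a} :=
    (measurableSet_le (hu.abs.ennreal_ofReal) measurable_const).compl
  have h := measurable_measure_prodMk_right (μ := volume.restrict (Ioi (0:ℝ))) hs
  have e : timeSup n u ⁻¹' Iic a = {x | volume.restrict (Ioi (0:ℝ))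
      ((fun t => (t, x)) ⁻¹' {q : ℝ × Rn n | ¬ ENNReal.ofReal |u q.1 q.2| ≤ a}) = 0} := by
    ext x
    exact timeSup_le_iff.trans ae_iff
  rw [e]
  exact h (measurableSet_singleton 0)

/-- The Duhamel integral of `|u|^b u` is dominated by a Riesz potential of the maximal-in-time
function. -/
theorem timeSup_duhamel_le {n : ℕ} (hn : n ≠ 0) (b : ℕ) {α : ℝ} (hα0 : 0 < α) (hα1 : α ≤ 1)
    (h2α : 2 * α < n) :
    ∃ C > (0:ℝ), ∀ u : ℝ → Rn n → ℝ, Measurable (Function.uncurry u) → ∀ x,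
      timeSup n (fun t x => ∫ s in Ioc (0:ℝ) t,
          conv n (gKer n α (t - s)) (fun y => |u s y| ^ b * u s y) x) x ≤
        ENNReal.ofReal C * ∫⁻ y, ENNReal.ofReal (‖x - y‖ ^ (2 * α - n)) *
          timeSup n u y ^ (b + 1) := by
  have : NeZero n := ⟨hn⟩
  obtain ⟨k, hkm, hk, C, hC, hkC⟩ := exists_gKer_majorant hn hα0 hα1 h2α
  refine ⟨C, hC, fun u hu x => timeSup_le_iff.2 (ae_of_all _ fun t => ?_)⟩
  have hne : ∀ᵐ y : Rn n, x - y ≠ 0 := by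
    filter_upwards [compl_mem_ae_iff.2 (measure_singleton x)] with y hy h
    exact hy (sub_eq_zero.1 h).symm
  have hae : ∀ y, ∀ᵐ s ∂(volume.restrict (Ioo (0:ℝ) t)), ENNReal.ofReal |u s y| ≤ timeSup n u y :=
    fun y => ae_restrict_of_ae_restrict_of_subset Ioo_subset_Ioi_self (timeSup_le_iff.1 le_rfl)
  have hu' : Measurable fun q : ℝ × Rn n => ENNReal.ofReal |u q.1 q.2| := hu.abs.ennreal_ofReal
  have hkm' : Measurable fun q : ℝ × Rn n => k (t - q.1) (x - q.2) :=
    hkm.comp (f := fun q : ℝ × Rn n => (t - q.1, x - q.2)) (by fun_prop)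
  rw [← Real.enorm_eq_ofReal_abs]
  calc ‖∫ s in Ioc (0:ℝ) t, conv n (gKer n α (t - s)) (fun y => |u s y| ^ b * u s y) x‖ₑ
      ≤ ∫⁻ s in Ioc (0:ℝ) t, ‖conv n (gKer n α (t - s)) (fun y => |u s y| ^ b * u s y) x‖ₑ :=
        enorm_integral_le_lintegral_enorm _
    _ = ∫⁻ s in Ioo (0:ℝ) t, ‖conv n (gKer n α (t - s)) (fun y => |u s y| ^ b * u s y) x‖ₑ :=
        setLIntegral_congr Ioo_ae_eq_Ioc.symm
    _ ≤ ∫⁻ s in Ioo (0:ℝ) t, ∫⁻ y, k (t - s) (x - y) * ENNReal.ofReal |u s y| ^ (b + 1) := by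
        refine setLIntegral_mono' measurableSet_Ioo fun s hs => ?_
        refine (enorm_integral_le_lintegral_enorm _).trans (lintegral_mono_ae ?_)
        filter_upwards [hne] with y hy
        rw [enorm_mul, enorm_mul, enorm_pow, Real.enorm_abs, ← pow_succ,
          ← Real.enorm_eq_ofReal_abs]
        exact mul_le_mul_left (hk _ (sub_pos.2 hs.2) _ hy) _
    _ = ∫⁻ y, ∫⁻ s in Ioo (0:ℝ) t, k (t - s) (x - y) * ENNReal.ofReal |u s y| ^ (b + 1) :=
        lintegral_lintegral_swap (hkm'.mul (hu'.pow_const _)).aemeasurable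
    _ ≤ ∫⁻ y, ENNReal.ofReal C * (ENNReal.ofReal (‖x - y‖ ^ (2 * α - n)) *
          timeSup n u y ^ (b + 1)) := by
        refine lintegral_mono_ae ?_
        filter_upwards [hne] with y hy
        have hky : Measurable fun s => k (t - s) (x - y) :=
          hkm'.comp (measurable_id.prodMk measurable_const)
        calc _ ≤ ∫⁻ s in Ioo (0:ℝ) t, k (t - s) (x - y) * timeSup n u y ^ (b + 1) := by
              refine lintegral_mono_ae ?_
              filter_upwards [hae y] with s hs
              gcongr
          _ = (∫⁻ s in Ioo (0:ℝ) t, k (t - s) (x - y)) * timeSup n u y ^ (b + 1) :=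
              lintegral_mul_const _ hky
          _ ≤ ENNReal.ofReal (C * ‖x - y‖ ^ (2 * α - n)) * timeSup n u y ^ (b + 1) := by
              refine mul_le_mul_left (le_trans ?_ (hkC _ hy)) _
              rw [← lintegral_indicator measurableSet_Ioo, ← lintegral_indicator measurableSet_Ioi,
                ← lintegral_sub_left_eq_self _ t]
              refine lintegral_mono fun s => ?_
              by_cases hs : t - s ∈ Ioo 0 t
              · have hs0 : s ∈ Ioi 0 := by
                  have := hs.2
                  exact (sub_lt_self_iff t).1 this
                rw [indicator_of_mem hs, indicator_of_mem hs0, sub_sub_cancel]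
              · rw [indicator_of_notMem hs]
                exact zero_le
          _ = _ := by rw [ENNReal.ofReal_mul hC.le, mul_assoc]
    _ = _ := lintegral_const_mul' _ _ ENNReal.ofReal_ne_top

theorem lintegral_div_rpow_le_of_luxNorm_lt {Ω : Type*} [MeasurableSpace Ω] {μ : Measure Ω}
    {p : Ω → ℝ} (hp : ∀ x, 0 ≤ p x) {f : Ω → ℝ≥0∞} {l : ℝ≥0∞} (h : luxNorm μ p f < l) :
    ∫⁻ x, (f x / l) ^ p x ∂μ ≤ 1 := by
  obtain ⟨l', ⟨-, hl'⟩, hlt⟩ := sInf_lt_iff.1 h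
  refine (lintegral_mono fun x => ?_).trans hl'
  exact ENNReal.rpow_le_rpow (ENNReal.div_le_div_left hlt.le _) (hp x)

theorem luxNorm_le_of_le_mul {Ω : Type*} [MeasurableSpace Ω] {μ : Measure Ω}
    {p : Ω → ℝ} (hp : ∀ x, 1 ≤ p x) {W g : Ω → ℝ≥0∞} {K c : ℝ≥0∞} (hK : K ≠ ∞)
    (hg : ∫⁻ x, g x ^ p x ∂μ ≤ K) (hc0 : c ≠ 0) (hW : ∀ x, W x ≤ c * g x) :
    luxNorm μ p W ≤ max 1 K * c := by
  set A := max 1 K with hA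
  have hA1 : 1 ≤ A := le_max_left _ _
  have hA0 : A ≠ 0 := (one_pos.trans_le hA1).ne'
  have hAt : A ≠ ∞ := (max_lt ENNReal.one_lt_top hK.lt_top).ne
  refine sInf_le ⟨pos_iff_ne_zero.2 (mul_ne_zero hA0 hc0), ?_⟩
  calc ∫⁻ x, (W x / (A * c)) ^ p x ∂μ ≤ ∫⁻ x, A⁻¹ * g x ^ p x ∂μ := by
        refine lintegral_mono fun x => ?_
        have hpx : 0 ≤ p x := zero_le_one.trans (hp x)
        have h1 : W x / (A * c) ≤ A⁻¹ * g x := by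
          refine ENNReal.div_le_of_le_mul ((hW x).trans (le_of_eq ?_))
          rw [show A⁻¹ * g x * (A * c) = (A⁻¹ * A) * (c * g x) by ring,
            ENNReal.inv_mul_cancel hA0 hAt, one_mul]
        refine (ENNReal.rpow_le_rpow h1 hpx).trans ?_
        rw [ENNReal.mul_rpow_of_nonneg _ _ hpx]
        refine mul_le_mul_left ?_ _
        simpa using ENNReal.rpow_le_rpow_of_exponent_ge (ENNReal.inv_le_one.2 hA1) (hp x)
    _ = A⁻¹ * ∫⁻ x, g x ^ p x ∂μ := lintegral_const_mul' _ _ (ENNReal.inv_ne_top.2 hA0)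
    _ ≤ A⁻¹ * A := mul_le_mul_right (hg.trans (le_max_right _ _)) _
    _ = 1 := ENNReal.inv_mul_cancel hA0 hAt

/-- The exponent at infinity inherits essential bounds. -/
theorem exponent_infty_mem_Icc {n : ℕ} (hn : n ≠ 0) {p : Rn n → ℝ} {pm P pinf C : ℝ}
    (hpm0 : 0 < pm) (hpm : ∀ᵐ x, pm ≤ p x) (hP : ∀ᵐ x, p x ≤ P)
    (h : ∀ x, |1 / p x - 1 / pinf| ≤ C / Real.log (Real.exp 1 + ‖x‖)) :
    pm ≤ pinf ∧ pinf ≤ P := by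
  have : NeZero n := ⟨hn⟩
  have hlim : Filter.Tendsto (fun R : ℝ => |C| / Real.log (Real.exp 1 + R)) Filter.atTop
      (nhds 0) :=
    (Real.tendsto_log_atTop.comp (Filter.tendsto_atTop_add_const_left _ _ Filter.tendsto_id)).const_div_atTop _
  have hclose : ∀ ε > 0, ∃ x, pm ≤ p x ∧ p x ≤ P ∧ |1 / p x - 1 / pinf| ≤ ε := by
    intro ε hε
    obtain ⟨R, hR0, hR⟩ := ((Filter.eventually_ge_atTop (0:ℝ)).and
      (hlim.eventually_lt_const hε)).exists
    have hd : Dense {x : Rn n | pm ≤ p x ∧ p x ≤ P} :=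
      Measure.dense_of_ae (hpm.and hP)
    have hopen : IsOpen {x : Rn n | R < ‖x‖} := isOpen_lt continuous_const continuous_norm
    obtain ⟨x, hxR, hx⟩ := hd.inter_open_nonempty _ hopen (NormedSpace.exists_lt_norm ℝ (Rn n) R)
    have hxR' : R < ‖x‖ := hxR
    refine ⟨x, hx.1, hx.2, (h x).trans (le_trans ?_ hR.le)⟩
    have hlog : 0 < Real.log (Real.exp 1 + R) :=
      Real.log_pos (by linarith [Real.add_one_le_exp 1])
    have hlog' : Real.log (Real.exp 1 + R) ≤ Real.log (Real.exp 1 + ‖x‖) :=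
      Real.log_le_log (by positivity) (by linarith)
    calc _ ≤ |C| / Real.log (Real.exp 1 + ‖x‖) := by
          gcongr
          · linarith
          · exact le_abs_self C
      _ ≤ _ := by gcongr
  have hP0 : 0 < P := by
    obtain ⟨x, h1, h2, -⟩ := hclose 1 one_pos
    linarith
  have hle : 1 / pinf ≤ 1 / pm := by
    refine le_of_forall_pos_le_add fun ε hε => ?_
    obtain ⟨x, h1, h2, h3⟩ := hclose ε hε
    have := one_div_le_one_div_of_le hpm0 h1
    linarith [(abs_le.1 h3).1]
  have hge : 1 / P ≤ 1 / pinf := by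
    refine le_of_forall_pos_le_add fun ε hε => ?_
    obtain ⟨x, h1, h2, h3⟩ := hclose ε hε
    have := one_div_le_one_div_of_le (hpm0.trans_le h1) h2
    linarith [(abs_le.1 h3).2]
  have hpinf : 0 < pinf := one_div_pos.1 ((one_div_pos.2 hP0).trans_le hge)
  exact ⟨(one_div_le_one_div hpinf hpm0).1 hle, (one_div_le_one_div hP0 hpinf).1 hge⟩

theorem abs_sub_le_of_abs_one_div_sub_le {a c P ε : ℝ} (ha : 0 < a) (hc : 0 < c) (haP : a ≤ P)
    (hcP : c ≤ P) (h : |1 / a - 1 / c| ≤ ε) : |a - c| ≤ P ^ 2 * ε := by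
  have e : a - c = -(a * c * (1 / a - 1 / c)) := by field_simp; ring
  rw [e, abs_neg, abs_mul, abs_of_pos (mul_pos ha hc), sq]
  have hP := ha.trans_le haP
  exact mul_le_mul (mul_le_mul haP hcP hc.le hP.le) h (abs_nonneg _) (by positivity)

/-- Modular boundedness of the dyadic maximal operator at the exponent `p / d`. -/
theorem dyadicMax_div_exponent {n : ℕ} (hn : n ≠ 0) {p : Rn n → ℝ} (hplog : IsPLog univ p)
    {d pm P : ℝ} (hd : 0 < d) (hdpm : d < pm) (hpm : ∀ᵐ x, pm ≤ p x) (hP : ∀ᵐ x, p x ≤ P) :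
    ∃ K : ℝ≥0∞, K ≠ ∞ ∧ ∀ f, Measurable f → ∫⁻ x, f x ^ (p x / d) ≤ 1 →
      ∫⁻ x, dyadicMax n f x ^ (p x / d) ≤ K := by
  obtain ⟨hpmeas, hp1, C₁, hC₁, C₂, hC₂, pinf, hloc, hdecay⟩ := hplog
  have hpm0 : 0 < pm := hd.trans hdpm
  obtain ⟨hpinf1, hpinf2⟩ := exponent_infty_mem_Icc hn hpm0 hpm hP fun x => hdecay x (mem_univ x)
  have key : ∀ a c ε, |a - c| ≤ P ^ 2 * ε → |a / d - c / d| ≤ P ^ 2 / d * ε := by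
    intro a c ε h
    rw [← sub_div, abs_div, abs_of_pos hd, div_mul_eq_mul_div]
    gcongr
  refine dyadicMax_variable hn (hpmeas.div_const d) (qm := pm / d) (Q := P / d) (qinf := pinf / d)
    (C₁ := P ^ 2 / d * C₁) (C₂ := P ^ 2 / d * C₂) ((one_lt_div hd).2 hdpm) ?_ ?_
    ((one_lt_div hd).2 (hdpm.trans_le hpinf1)) (by positivity) ?_ ?_
  · filter_upwards [hpm] with x hx
    gcongr
  · filter_upwards [hP] with x hx
    gcongr
  · filter_upwards [hP] with x hx
    filter_upwards [hP] with y hy hxy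
    rw [mul_div_assoc]
    exact key _ _ _ (abs_sub_le_of_abs_one_div_sub_le (one_pos.trans_le (hp1 x (mem_univ x)))
      (one_pos.trans_le (hp1 y (mem_univ y))) hx hy (hloc x (mem_univ x) y (mem_univ y) hxy))
  · filter_upwards [hP] with x hx
    rw [mul_div_assoc]
    exact key _ _ _ (abs_sub_le_of_abs_one_div_sub_le (one_pos.trans_le (hp1 x (mem_univ x)))
      (hpm0.trans_le hpinf1) hx hpinf2 (hdecay x (mem_univ x)))

/-- Control of the nonlinear term (γ = 0) in mixed variable Lebesgue spaces. -/
theorem stmt9 (n b : ℕ) (hn : 1 ≤ n) (hb : 1 ≤ b) (α : ℝ) (hα : 1/2 < α ∧ α ≤ 1)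
    (h2α : 2 * α < n) (hnb : 2 * α * ((b:ℝ) + 1) < (n:ℝ) * b)
    (p : Rn n → ℝ) (hplog : IsPLog univ p)
    (hpminus : ∃ pm : ℝ, (b:ℝ) + 1 < pm ∧ ∀ᵐ x ∂(volume : Measure (Rn n)), pm ≤ p x)
    (hpplus : ∃ P : ℝ, (∀ᵐ x ∂(volume : Measure (Rn n)), p x ≤ P) ∧
      2 * α * P < (n:ℝ) * ((b:ℝ) + 1)) :
    ∃ C > (0:ℝ), ∀ u : ℝ → Rn n → ℝ, Measurable (Function.uncurry u) →
      mixedN n p ((n:ℝ) * b / (2 * α))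
        (fun t x => ∫ s in Ioc (0:ℝ) t,
          conv n (gKer n α (t - s)) (fun y => |u s y| ^ b * u s y) x)
      ≤ ENNReal.ofReal C * (mixedN n p ((n:ℝ) * b / (2 * α)) u) ^ (b + 1) := by
  have hn' : n ≠ 0 := by omega
  have hn0 : (0:ℝ) < n := by positivity
  have hb0 : (0:ℝ) < b := by exact_mod_cast hb
  obtain ⟨pm, hpm1, hpm⟩ := hpminus
  obtain ⟨P, hP, -⟩ := hpplus
  obtain ⟨hα0, hα1⟩ := hα
  have hα0 : 0 < α := by linarith
  set d : ℝ := (b:ℝ) + 1 with hd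
  have hd0 : 0 < d := by positivity
  set r : ℝ := (n:ℝ) * b / (2 * α) with hr
  set s : ℝ := r / d with hs
  have hr1 : d < r := by
    rw [hr, lt_div_iff₀ (by positivity)]
    linarith
  have hs1 : 1 < s := (one_lt_div hd0).2 hr1
  have hβs : 2 * α * s = n * (b / d) := by
    rw [hs, hr]
    field_simp
  have hθ : 1 - 2 * α * s / n = 1 / d := by
    rw [hβs, hd]
    field_simp
    ring
  have hβsn : 2 * α * s < n := by
    rw [hβs]
    refine mul_lt_of_lt_one_right hn0 ?_
    rw [div_lt_one hd0]
    linarith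
  obtain ⟨C₀, hC₀, hduh⟩ := timeSup_duhamel_le hn' b hα0 hα1 h2α
  obtain ⟨C₁, hC₁, hriesz⟩ := riesz_le_dyadicMax (n := n) (by positivity) h2α hs1 hβsn
  obtain ⟨K₁, hK₁, hmax₁⟩ := dyadicMax_div_exponent hn' hplog hd0 hpm1 hpm hP
  obtain ⟨K₂, hK₂, hmax₂⟩ := dyadicMax_strong hn' hs1
  set K := max 1 (max K₁ K₂) with hK
  have hKt : K ≠ ∞ := (max_lt ENNReal.one_lt_top (max_lt hK₁.lt_top hK₂.lt_top)).ne
  have hK1 : 1 ≤ K := le_max_left _ _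
  have hK0 : 0 < K.toReal := ENNReal.toReal_pos (one_pos.trans_le hK1).ne' hKt
  refine ⟨K.toReal * (C₀ * C₁), by positivity, fun u hu => ?_⟩
  set N := mixedN n p r u with hN
  set W := timeSup n (fun t x => ∫ s in Ioc (0:ℝ) t,
    conv n (gKer n α (t - s)) (fun y => |u s y| ^ b * u s y) x) with hW
  have hscaled : ∀ l : ℝ≥0∞, N < l → l ≠ ∞ →
      max (luxNorm volume p W) (luxNorm volume (fun _ => r) W) ≤
        ENNReal.ofReal (K.toReal * (C₀ * C₁)) * l ^ (b + 1) := by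
    intro l hl hlt
    have hl0 : l ≠ 0 := (zero_le.trans_lt hl).ne'
    have hp1 : ∀ x, 1 ≤ p x := fun x => hplog.2.1 x (mem_univ x)
    have hmodp := lintegral_div_rpow_le_of_luxNorm_lt (fun x => zero_le_one.trans (hp1 x))
      ((le_max_left _ _).trans_lt hl)
    have hmodr := lintegral_div_rpow_le_of_luxNorm_lt (fun _ => hd0.le.trans hr1.le)
      ((le_max_right _ _).trans_lt hl)
    set f : Rn n → ℝ≥0∞ := fun x => (timeSup n u x / l) ^ d with hf
    have hfm : Measurable f := ((measurable_timeSup hu).div_const l).pow_const d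
    have hfp : ∀ x q, f x ^ (q / d) = (timeSup n u x / l) ^ q := fun x q => by
      rw [hf, ← ENNReal.rpow_mul, mul_div_cancel₀ _ hd0.ne']
    have hfpow : ∀ y, timeSup n u y ^ (b + 1) = l ^ (b + 1) * f y := fun y => by
      have e : f y = (timeSup n u y / l) ^ (b + 1) := by
        rw [← ENNReal.rpow_natCast, Nat.cast_add_one]
      rw [e, ← mul_pow,
        ENNReal.mul_div_cancel hl0 hlt]
    have hint_p := hmax₁ f hfm (by simpa only [hfp] using hmodp)
    have hint_s : ∫⁻ y, f y ^ s ≤ 1 := by simpa only [hs, hfp] using hmodr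
    set c := ENNReal.ofReal (C₀ * C₁) * l ^ (b + 1) with hc
    have hc0 : c ≠ 0 := mul_ne_zero (ENNReal.ofReal_pos.2 (by positivity)).ne' (pow_ne_zero _ hl0)
    have hWle : ∀ x, W x ≤ c * dyadicMax n f x ^ (1 / d) := by
      intro x
      refine (hduh u hu x).trans ?_
      have e : ∫⁻ y, ENNReal.ofReal (‖x - y‖ ^ (2 * α - n)) * timeSup n u y ^ (b + 1) =
          l ^ (b + 1) * ∫⁻ y, ENNReal.ofReal (‖x - y‖ ^ (2 * α - n)) * f y := by
        rw [← lintegral_const_mul' _ _ (ENNReal.pow_ne_top hlt)]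
        refine lintegral_congr fun y => ?_
        rw [hfpow]
        ring
      have h := hriesz f hfm hint_s x
      rw [hθ] at h
      rw [e, hc, ENNReal.ofReal_mul hC₀.le]
      calc _ ≤ ENNReal.ofReal C₀ * (l ^ (b + 1) *
            (ENNReal.ofReal C₁ * dyadicMax n f x ^ (1 / d))) := by gcongr
        _ = _ := by ring
    have hg : ∀ x q, (dyadicMax n f x ^ (1 / d)) ^ q = dyadicMax n f x ^ (q / d) := fun x q => by
      rw [← ENNReal.rpow_mul, one_div_mul_eq_div]
    have hfin : ENNReal.ofReal (K.toReal * (C₀ * C₁)) * l ^ (b + 1) = K * c := by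
      rw [ENNReal.ofReal_mul hK0.le, ENNReal.ofReal_toReal hKt, mul_assoc]
    rw [hfin]
    refine max_le ?_ ?_
    · refine (luxNorm_le_of_le_mul hp1 hK₁ ?_ hc0 hWle).trans
        (mul_le_mul_left (max_le_max_left _ (le_max_left _ _)) _)
      simpa only [hg] using hint_p
    · refine (luxNorm_le_of_le_mul (fun _ => (by linarith : 1 ≤ r)) hK₂ ?_ hc0 hWle).trans
        (mul_le_mul_left (max_le_max_left _ (le_max_right _ _)) _)
      simp only [hg]
      calc _ ≤ K₂ * ∫⁻ y, f y ^ s := hmax₂ f hfm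
        _ ≤ K₂ * 1 := mul_le_mul_right hint_s _
        _ = K₂ := mul_one _
  by_cases hNt : N = ∞
  · rw [hNt, ENNReal.top_pow (Nat.succ_ne_zero b), ENNReal.mul_top]
    · exact le_top
    · exact (ENNReal.ofReal_pos.2 (by positivity)).ne'
  have hcont : Continuous fun l : ℝ≥0∞ =>
      ENNReal.ofReal (K.toReal * (C₀ * C₁)) * l ^ (b + 1) :=
    (ENNReal.continuous_const_mul ENNReal.ofReal_ne_top).comp (ENNReal.continuous_pow _)
  have hne : (nhdsWithin N (Ioi N)).NeBot := nhdsGT_neBot_of_exists_gt ⟨∞, lt_top_iff_ne_top.2 hNt⟩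
  refine ge_of_tendsto ((hcont.tendsto N).mono_left (nhdsWithin_le_nhds (s := Ioi N))) ?_
  filter_upwards [Ioo_mem_nhdsGT (lt_top_iff_ne_top.2 hNt)] with l hl
  exact hscaled l hl.1 hl.2.ne
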